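/- Let g be a Lie algebra over a field of characteristic zero and h ⊂ g a finite-dimensional subalgebra admitting an ad(h)-invariant complement. Then the characteristic homomorphism χ_W: (S^j h)^{*h} → H^{2j}(W(g,h)), χ_W(P) = class of (1/j!)(id⊗P)(F^j), is an isomorphism for every j ≥ 0; moreover its composition with the map H^·(W(g,h)) → H^·(g,h) induced by the canonical projection W(g,h) → C^·(g,h) sends P ∈ (S^j h)^{*h} to the class of the relative cocycle χ(P)(v_1∧⋯∧v_{2j}) = (1/j!)∑'_σ sign(σ) P(C(v_{σ(1)},v_{σ(2)}),…,C(v_{σ(2j−1)},v_{σ(2j)})), where C(v,w) = [pr(v),pr(w)] − pr([v,w]) for any ad(h)-equivariant projection pr: g → h and the sum ∑' is over σ ∈ S_{2j} with σ(2i−1) < σ(2i) for all i; in particular this cohomology class is independent of the choice of pr. -/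

import Mathlib

noncomputable section

section Weil

variable (F : Type*) [Field F] (g : Type*) [LieRing g] [LieAlgebra F g]

/-- The tuple `(br, v_0, …, v̂_i, …, v̂_j, …, v_d)` (`i < j`) used in the
Chevalley–Eilenberg differential. -/
def pairTupleW {G : Type*} (d : ℕ) (v : Fin (d+1) → G) (br : G) (i j : Fin (d+1)) :
    Fin d → G :=
  fun m =>
    if hm : m.1 = 0 then br
    else if h1 : m.1 - 1 < i.1 then v ⟨m.1 - 1, by have := i.2; omega⟩
    else if h2 : m.1 < j.1 then v ⟨m.1, by have := j.2; omega⟩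
    else v ⟨m.1 + 1, by have := m.2; omega⟩

/-- The (relative) Chevalley–Eilenberg differential `d_Lie` on cochains with values in
`(S^j g)^*` (coadjoint action extended to the symmetric power). -/
def dLieS (k j : ℕ) (c : (Fin k → g) → (Fin j → g) → F) :
    (Fin (k+1) → g) → (Fin j → g) → F :=
  fun v w =>
    (∑ i : Fin (k+1), (-1:F)^(i.1+1) *
      ∑ r : Fin j, c (v ∘ i.succAbove) (Function.update w r ⁅v i, w r⁆))
    + ∑ i : Fin (k+1), ∑ l : Fin (k+1),
        (if i < l then (-1:F)^(i.1+l.1) * c (pairTupleW k v ⁅v i, v l⁆ i l) w else 0)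

/-- The Koszul piece `d'` of the Weil differential:
`d'c(v ⊗ w_1⋯w_{j+1}) = ∑_k c(π(w_k)∧v ⊗ w_1⋯ŵ_k⋯w_{j+1})`. -/
def dKoszul (i j : ℕ) (c : (Fin (i+1) → g) → (Fin j → g) → F) :
    (Fin i → g) → (Fin (j+1) → g) → F :=
  fun v w => ∑ r : Fin (j+1), c (Fin.cons (w r) v) (w ∘ r.succAbove)

variable (h : LieSubalgebra F g)

/-- An element of `W^{i,j}(g,h) = (Λ^i(g/h)⊗S^j g)^{*h}`: a functional, multilinear and
alternating in the first block, multilinear and symmetric in the second block, vanishing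
whenever a first-block argument lies in `h`, and `h`-invariant. -/
def IsWCochain (i j : ℕ) (c : (Fin i → g) → (Fin j → g) → F) : Prop :=
  (∀ (v : Fin i → g) (t : Fin i) (x y : g) (w : Fin j → g),
      c (Function.update v t (x + y)) w
        = c (Function.update v t x) w + c (Function.update v t y) w) ∧
  (∀ (v : Fin i → g) (t : Fin i) (s : F) (x : g) (w : Fin j → g),
      c (Function.update v t (s • x)) w = s * c (Function.update v t x) w) ∧
  (∀ (v : Fin i → g) (t t' : Fin i) (w : Fin j → g), t ≠ t' → v t = v t' → c v w = 0) ∧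
  (∀ (v : Fin i → g) (w : Fin j → g) (r : Fin j) (x y : g),
      c v (Function.update w r (x + y))
        = c v (Function.update w r x) + c v (Function.update w r y)) ∧
  (∀ (v : Fin i → g) (w : Fin j → g) (r : Fin j) (s : F) (x : g),
      c v (Function.update w r (s • x)) = s * c v (Function.update w r x)) ∧
  (∀ (v : Fin i → g) (w : Fin j → g) (ρ : Equiv.Perm (Fin j)), c v (w ∘ ρ) = c v w) ∧
  (∀ (v : Fin i → g) (t : Fin i) (w : Fin j → g), v t ∈ h → c v w = 0) ∧
  (∀ X ∈ h, ∀ (v : Fin i → g) (w : Fin j → g),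
      (∑ t : Fin i, c (Function.update v t ⁅X, v t⁆) w)
        + (∑ r : Fin j, c v (Function.update w r ⁅X, w r⁆)) = 0)

/-- An element of the relative Weil algebra `W(g,h)` of total degree `m`, presented by its
components `W i j ∈ W^{i,j}(g,h)` (`i + 2j = m`, the other components being zero). -/
def IsWElt (m : ℕ) (W : ∀ i j : ℕ, (Fin i → g) → (Fin j → g) → F) : Prop :=
  (∀ i j, IsWCochain F g h i j (W i j)) ∧ (∀ i j, i + 2*j ≠ m → W i j = 0)

/-- The Weil differential `d = d_Lie + d'`. -/
def dWeil (W : ∀ i j : ℕ, (Fin i → g) → (Fin j → g) → F) :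
    ∀ i j : ℕ, (Fin i → g) → (Fin j → g) → F :=
  fun i j =>
    (match i with
     | 0 => 0
     | (i'+1) => dLieS F g i' j (W i' j)) +
    (match j with
     | 0 => 0
     | (j'+1) => dKoszul F g i j' (W (i+1) j'))

/-- `W` is a coboundary in the relative Weil algebra (in total degree `m`). -/
def IsWCobd : (m : ℕ) → (∀ i j : ℕ, (Fin i → g) → (Fin j → g) → F) → Prop
  | 0, W => ∀ i j, W i j = 0
  | (m'+1), W => ∃ W', IsWElt F g h m' W' ∧ dWeil F g W' = W

/-- An (extension to `g` of an) invariant polynomial `Q ∈ (S^j h)^{*h}`: a symmetric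
multilinear form, `ad h`-invariant on `h`-tuples. -/
def IsSymPoly (j : ℕ) (Q : (Fin j → g) → F) : Prop :=
  (∀ (w : Fin j → g) (r : Fin j) (x y : g),
      Q (Function.update w r (x + y))
        = Q (Function.update w r x) + Q (Function.update w r y)) ∧
  (∀ (w : Fin j → g) (r : Fin j) (s : F) (x : g),
      Q (Function.update w r (s • x)) = s * Q (Function.update w r x)) ∧
  (∀ (w : Fin j → g) (ρ : Equiv.Perm (Fin j)), Q (w ∘ ρ) = Q w) ∧
  (∀ X ∈ h, ∀ w : Fin j → g, (∀ r, w r ∈ h) →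
      ∑ r : Fin j, Q (Function.update w r ⁅X, w r⁆) = 0)

end Weil

section ChernWeil

variable (F : Type*) [Field F] (g : Type*) [LieRing g] [LieAlgebra F g]

/-- `pr` is an `ad(h)`-equivariant projection of `g` onto `h`. -/
def IsEqProj (h : LieSubalgebra F g) (pr : g →ₗ[F] g) : Prop :=
  (∀ x, pr x ∈ h) ∧ (∀ x ∈ h, pr x = x) ∧ (∀ X ∈ h, ∀ v, pr ⁅X, v⁆ = ⁅X, pr v⁆)

/-- The curvature `C(x,y) = [pr x, pr y] − pr [x,y]` of the connection associated with an
equivariant projection `pr`. -/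
def curvW (pr : g →ₗ[F] g) (x y : g) : g := ⁅pr x, pr y⁆ - pr ⁅x, y⁆

/-- The characteristic homomorphism `χ_W(P) = (1/j!)(id⊗P)(F^j)`, written out in its
components in `W^{2k,j−k}(g,h)`:
`χ_W(P)^{(k)}(v_1,…,v_{2k})(w_1,…,w_{j−k}) = (1/k!)∑'_σ sign σ
P(C(v_{σ(1)},v_{σ(2)}),…,C(v_{σ(2k−1)},v_{σ(2k)}), pr(w_1),…,pr(w_{j−k}))`. -/
def chiW (pr : g →ₗ[F] g) (j : ℕ) (P : (Fin j → g) → F) :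
    ∀ i j' : ℕ, (Fin i → g) → (Fin j' → g) → F :=
  fun i j' v w =>
    if hc : i % 2 = 0 ∧ i / 2 + j' = j then
      (((i/2).factorial : F))⁻¹ *
      ∑ σ : Equiv.Perm (Fin i),
        (if (∀ t : Fin (i/2),
              σ ⟨2*t.1, by have := t.2; have := hc.1; omega⟩
                < σ ⟨2*t.1+1, by have := t.2; have := hc.1; omega⟩) then
          (Equiv.Perm.sign σ : ℤ) • P (fun t : Fin j =>
            if ht : t.1 < i/2 then
              curvW F g pr
                (v (σ ⟨2*t.1, by have := hc.1; omega⟩))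
                (v (σ ⟨2*t.1+1, by have := hc.1; omega⟩))
            else pr (w ⟨t.1 - i/2, by have := hc.2; have := t.2; omega⟩))
        else 0)
    else 0

/-- The explicit Chern–Weil relative cocycle `χ(P)(v_1∧⋯∧v_{2j}) = (1/j!)∑'_σ sign σ
P(C(v_{σ(1)},v_{σ(2)}),…,C(v_{σ(2j−1)},v_{σ(2j)}))`, the sum over `σ ∈ S_{2j}` with
`σ(2i−1) < σ(2i)`. -/
def chernW (pr : g →ₗ[F] g) (j : ℕ) (P : (Fin j → g) → F) (v : Fin (2*j) → g) : F :=
  ((j.factorial : F))⁻¹ *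
    ∑ σ : Equiv.Perm (Fin (2*j)),
      if (∀ t : Fin j, σ ⟨2*t.1, by have := t.2; omega⟩ < σ ⟨2*t.1+1, by have := t.2; omega⟩)
      then (Equiv.Perm.sign σ : ℤ) •
        P (fun t : Fin j => curvW F g pr
            (v (σ ⟨2*t.1, by have := t.2; omega⟩))
            (v (σ ⟨2*t.1+1, by have := t.2; omega⟩)))
      else 0

/-- Relative Lie algebra cochain with trivial coefficients: multilinear, alternating,
vanishing if an argument lies in `h`, and `h`-invariant. -/
def IsRelTrivW (h : LieSubalgebra F g) (k : ℕ) (c : (Fin k → g) → F) : Prop :=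
  (∀ (v : Fin k → g) (t : Fin k) (x y : g),
      c (Function.update v t (x + y))
        = c (Function.update v t x) + c (Function.update v t y)) ∧
  (∀ (v : Fin k → g) (t : Fin k) (s : F) (x : g),
      c (Function.update v t (s • x)) = s * c (Function.update v t x)) ∧
  (∀ (v : Fin k → g) (t t' : Fin k), t ≠ t' → v t = v t' → c v = 0) ∧
  (∀ (v : Fin k → g) (t : Fin k), v t ∈ h → c v = 0) ∧
  (∀ X ∈ h, ∀ v : Fin k → g, ∑ t : Fin k, c (Function.update v t ⁅X, v t⁆) = 0)

/-- The Chevalley–Eilenberg differential with trivial coefficients. -/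
def dTrivW (k : ℕ) (c : (Fin k → g) → F) : (Fin (k+1) → g) → F :=
  fun v =>
    ∑ i : Fin (k+1), ∑ l : Fin (k+1),
      (if i < l then (-1:F)^(i.1+l.1) * c (pairTupleW k v ⁅v i, v l⁆ i l) else 0)

/-- `c` is the coboundary of a relative cochain (trivial coefficients). -/
def IsRelTrivCobdW (h : LieSubalgebra F g) : (k : ℕ) → ((Fin k → g) → F) → Prop
  | 0, c => c = 0
  | (m+1), c => ∃ b, IsRelTrivW F g h m b ∧ c = dTrivW F g m b

end ChernWeil

set_option linter.unusedSectionVars false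
namespace WeilAux

section Ops

variable {F : Type*} [Field F] {g : Type*} [LieRing g] [LieAlgebra F g]

/-- Families of functions, the ambient space of the Weil algebra. -/
abbrev Wt (F : Type*) (g : Type*) := ∀ i j : ℕ, (Fin i → g) → (Fin j → g) → F

/-- contraction in the exterior variable -/
def iW (x : g) : Wt F g →ₗ[F] Wt F g where
  toFun W := fun i j v w => W (i+1) j (Fin.cons x v) w
  map_add' _ _ := rfl
  map_smul' _ _ := rfl

/-- contraction in the symmetric variable -/
def kW (x : g) : Wt F g →ₗ[F] Wt F g where
  toFun W := fun i j v w => W i (j+1) v (Fin.cons x w)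
  map_add' _ _ := rfl
  map_smul' _ _ := rfl

/-- alternating multiplication -/
def AW : (g → Wt F g) →ₗ[F] Wt F g where
  toFun f := fun i j => match i with
    | 0 => 0
    | (i+1) => fun v w => ∑ t : Fin (i+1), (-1 : F)^t.1 * f (v t) i j (v ∘ t.succAbove) w
  map_add' f f' := by
    funext i j
    cases i with
    | zero => simp
    | succ i => funext v w; simp [mul_add, Finset.sum_add_distrib]
  map_smul' s f := by
    funext i j
    cases i with
    | zero => simp
    | succ i => funext v w; simp [Finset.mul_sum, mul_left_comm]

/-- symmetric multiplication -/
def mW : (g → Wt F g) →ₗ[F] Wt F g where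
  toFun f := fun i j => match j with
    | 0 => 0
    | (j+1) => fun v w => ∑ r : Fin (j+1), f (w r) i j v (w ∘ r.succAbove)
  map_add' f f' := by
    funext i j
    cases j with
    | zero => simp
    | succ j => funext v w; simp [Finset.sum_add_distrib]
  map_smul' s f := by
    funext i j
    cases j with
    | zero => simp
    | succ i => funext v w; simp [Finset.mul_sum]

/-- Chevalley-Eilenberg part -/
def dL : Wt F g →ₗ[F] Wt F g where
  toFun W := fun i j => match i with
    | 0 => 0
    | (i+1) => dLieS F g i j (W i j)
  map_add' W W' := by
    funext i j
    cases i with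
    | zero => simp
    | succ i =>
      funext v w
      simp only [dLieS, Pi.add_apply, Finset.sum_add_distrib, mul_add]
      rw [add_add_add_comm]
      congr 1
      simp only [← Finset.sum_add_distrib]
      refine Finset.sum_congr rfl fun a _ => Finset.sum_congr rfl fun b _ => ?_
      split_ifs <;> simp
  map_smul' s W := by
    funext i j
    cases i with
    | zero => simp
    | succ i =>
      funext v w
      simp only [dLieS, Pi.smul_apply, smul_eq_mul, RingHom.id_apply, mul_add, Finset.mul_sum]
      congr 1
      · refine Finset.sum_congr rfl fun a _ => Finset.sum_congr rfl fun b _ => ?_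
        ring
      · refine Finset.sum_congr rfl fun a _ => Finset.sum_congr rfl fun b _ => ?_
        split_ifs
        · ring
        · simp

/-- Koszul part -/
def dK : Wt F g →ₗ[F] Wt F g where
  toFun W := mW (fun y => iW y W)
  map_add' W W' := by
    rw [← map_add]; congr 1
  map_smul' s W := by
    rw [← map_smul]; congr 1

/-- Lie derivative -/
def LW (x : g) : Wt F g →ₗ[F] Wt F g where
  toFun W := fun i j v w => -((∑ t : Fin i, W i j (Function.update v t ⁅x, v t⁆) w)
        + (∑ r : Fin j, W i j v (Function.update w r ⁅x, w r⁆)))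
  map_add' W W' := by
    funext i j v w
    simp only [Pi.add_apply, Finset.sum_add_distrib]; ring
  map_smul' s W := by
    funext i j v w
    simp only [Pi.smul_apply, smul_eq_mul, RingHom.id_apply, ← Finset.mul_sum]; ring

theorem dWeil_eq (W : Wt F g) : dWeil F g W = dL W + dK W := by
  funext i j
  cases i <;> cases j <;> rfl

theorem iW_apply (x : g) (W : Wt F g) (i j v w) :
    iW x W i j v w = W (i+1) j (Fin.cons x v) w := rfl
theorem kW_apply (x : g) (W : Wt F g) (i j v w) :
    kW x W i j v w = W i (j+1) v (Fin.cons x w) := rfl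

/-- coinduction principle, both variables -/
theorem coind {S : Set (Wt F g)} (h0 : ∀ c ∈ S, c 0 0 = 0)
    (hi : ∀ c ∈ S, ∀ x, iW x c ∈ S) (hk : ∀ c ∈ S, ∀ x, kW x c ∈ S) :
    ∀ c ∈ S, c = 0 := by
  have key : ∀ i j, ∀ c ∈ S, c i j = 0 := by
    intro i
    induction i with
    | zero =>
      intro j
      induction j with
      | zero => exact h0
      | succ j ih =>
        intro c hc
        funext v w
        have := congrFun (congrFun (ih _ (hk c hc (w 0))) v) (Fin.tail w)
        rw [kW_apply, Fin.cons_self_tail] at this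
        exact this
    | succ i ih =>
      intro j c hc
      funext v w
      have := congrFun (congrFun (ih j _ (hi c hc (v 0))) (Fin.tail v)) w
      rw [iW_apply, Fin.cons_self_tail] at this
      exact this
  intro c hc
  funext i j
  exact key i j c hc

/-- coinduction principle, exterior variable only -/
theorem coind' {S : Set (Wt F g)} (h0 : ∀ c ∈ S, ∀ j, c 0 j = 0)
    (hi : ∀ c ∈ S, ∀ x, iW x c ∈ S) : ∀ c ∈ S, c = 0 := by
  have key : ∀ i j, ∀ c ∈ S, c i j = 0 := by
    intro i
    induction i with
    | zero => intro j c hc; exact h0 c hc j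
    | succ i ih =>
      intro j c hc
      funext v w
      have := congrFun (congrFun (ih j _ (hi c hc (v 0))) (Fin.tail v)) w
      rw [iW_apply, Fin.cons_self_tail] at this
      exact this
  intro c hc
  funext i j
  exact key i j c hc

theorem cons_succ_comp (x : g) {i : ℕ} (v : Fin (i+1) → g) (t : Fin (i+1)) :
    (Fin.cons x v : Fin (i+2) → g) ∘ t.succ.succAbove = Fin.cons x (v ∘ t.succAbove) := by
  funext m
  refine Fin.cases ?_ (fun m => ?_) m <;> simp

theorem cons_zero_comp (x : g) {i : ℕ} (v : Fin i → g) :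
    (Fin.cons x v : Fin (i+1) → g) ∘ (0 : Fin (i+1)).succAbove = v := by
  funext m; simp

/-- ι A f = f x - A (ι f) -/
theorem iW_AW (x : g) (f : g → Wt F g) : iW x (AW f) = f x - AW (fun y => iW x (f y)) := by
  funext i j v w
  cases i with
  | zero =>
    rw [iW_apply]
    simp only [AW, LinearMap.coe_mk, AddHom.coe_mk]
    rw [Fin.sum_univ_succ, cons_zero_comp]
    simp
  | succ i =>
    rw [iW_apply]
    simp only [AW, LinearMap.coe_mk, AddHom.coe_mk, Pi.sub_apply, iW_apply]
    rw [Fin.sum_univ_succ, cons_zero_comp]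
    simp only [Fin.cons_zero, Fin.cons_succ, cons_succ_comp, Fin.val_zero, Fin.val_succ, pow_succ]
    simp [sub_eq_add_neg, Finset.sum_neg_distrib]

theorem kW_AW (x : g) (f : g → Wt F g) : kW x (AW f) = AW (fun y => kW x (f y)) := by
  funext i j v w
  cases i <;> rfl

theorem iW_mW (x : g) (f : g → Wt F g) : iW x (mW f) = mW (fun y => iW x (f y)) := by
  funext i j v w
  cases j <;> rfl

theorem kW_mW (x : g) (f : g → Wt F g) : kW x (mW f) = f x + mW (fun y => kW x (f y)) := by
  funext i j v w
  cases j with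
  | zero =>
    rw [kW_apply]
    simp only [mW, LinearMap.coe_mk, AddHom.coe_mk]
    rw [Fin.sum_univ_succ, cons_zero_comp]
    simp
  | succ i =>
    rw [kW_apply]
    simp only [mW, LinearMap.coe_mk, AddHom.coe_mk, Pi.add_apply, kW_apply]
    rw [Fin.sum_univ_succ, cons_zero_comp]
    simp only [Fin.cons_zero, Fin.cons_succ, cons_succ_comp]

theorem AW_zero (f : g → Wt F g) (j) : AW f 0 j = 0 := rfl
theorem mW_zero (f : g → Wt F g) (i) : mW f i 0 = 0 := rfl
theorem dL_zero (c : Wt F g) (j) : dL c 0 j = 0 := rfl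
theorem dK_apply (c : Wt F g) : dK c = mW (fun y => iW y c) := rfl

theorem iW_kW (x y : g) (c : Wt F g) : iW x (kW y c) = kW y (iW x c) := rfl

theorem iW_LW (x y : g) (c : Wt F g) : iW x (LW y c) = LW y (iW x c) - iW ⁅y, x⁆ c := by
  funext i j v w
  simp only [iW_apply, LW, LinearMap.coe_mk, AddHom.coe_mk, Pi.sub_apply]
  rw [Fin.sum_univ_succ]
  simp only [Fin.cons_zero, Fin.update_cons_zero, Fin.cons_succ, Fin.cons_update]
  ring

theorem kW_LW (x y : g) (c : Wt F g) : kW x (LW y c) = LW y (kW x c) - kW ⁅y, x⁆ c := by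
  funext i j v w
  simp only [kW_apply, LW, LinearMap.coe_mk, AddHom.coe_mk, Pi.sub_apply]
  rw [Fin.sum_univ_succ (n := j)]
  simp only [Fin.cons_zero, Fin.update_cons_zero, Fin.cons_succ, Fin.cons_update]
  ring

theorem kW_dK (x : g) (c : Wt F g) : kW x (dK c) = dK (kW x c) + iW x c := by
  rw [dK_apply, kW_mW, dK_apply, add_comm]; rfl

theorem LW_zz (x : g) (c : Wt F g) : LW x c 0 0 = 0 := by
  funext v w; simp [LW]

/-- The Alternating/symmetric/multilinear families. -/
structure IsAlt (W : Wt F g) : Prop where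
  va : ∀ i j (v : Fin i → g) (t : Fin i) (x y : g) (w : Fin j → g),
      W i j (Function.update v t (x + y)) w
        = W i j (Function.update v t x) w + W i j (Function.update v t y) w
  vs : ∀ i j (v : Fin i → g) (t : Fin i) (s : F) (x : g) (w : Fin j → g),
      W i j (Function.update v t (s • x)) w = s * W i j (Function.update v t x) w
  alt : ∀ i j (v : Fin i → g) (t t' : Fin i) (w : Fin j → g), t ≠ t' → v t = v t' → W i j v w = 0
  wa : ∀ i j (v : Fin i → g) (w : Fin j → g) (r : Fin j) (x y : g),
      W i j v (Function.update w r (x + y))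
        = W i j v (Function.update w r x) + W i j v (Function.update w r y)
  ws : ∀ i j (v : Fin i → g) (w : Fin j → g) (r : Fin j) (s : F) (x : g),
      W i j v (Function.update w r (s • x)) = s * W i j v (Function.update w r x)
  sym : ∀ i j (v : Fin i → g) (w : Fin j → g) (ρ : Equiv.Perm (Fin j)), W i j v (w ∘ ρ) = W i j v w

/-- bundled alternating map -/
def IsAlt.toAlt {W : Wt F g} (hW : IsAlt W) (i j : ℕ) (w : Fin j → g) : g [⋀^Fin i]→ₗ[F] F where
  toFun v := W i j v w
  map_update_add' := by
    intro inst v t x y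
    have : inst = instDecidableEqFin i := Subsingleton.elim _ _
    subst this
    exact hW.va i j v t x y w
  map_update_smul' := by
    intro inst v t x y
    have : inst = instDecidableEqFin i := Subsingleton.elim _ _
    subst this
    exact hW.vs i j v t x y w
  map_eq_zero_of_eq' := fun v a b hab hne => hW.alt i j v a b w hne hab

theorem IsAlt.iW {W : Wt F g} (hW : IsAlt W) (x : g) : IsAlt (iW x W) where
  va i j v t a b w := by simp only [iW_apply, Fin.cons_update]; exact hW.va _ _ _ _ _ _ _
  vs i j v t a b w := by simp only [iW_apply, Fin.cons_update]; exact hW.vs _ _ _ _ _ _ _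
  alt i j v t t' w h1 h2 := by
    rw [iW_apply]
    exact hW.alt _ _ _ t.succ t'.succ _ (by simpa using h1) (by simpa using h2)
  wa i j v w r a b := hW.wa _ _ _ _ _ _ _
  ws i j v w r a b := hW.ws _ _ _ _ _ _ _
  sym i j v w ρ := hW.sym _ _ _ _ _

theorem cons_comp_perm (x : g) {j : ℕ} (w : Fin j → g) (ρ : Equiv.Perm (Fin j)) :
    ∃ ρ' : Equiv.Perm (Fin (j+1)), (Fin.cons x (w ∘ ρ) : Fin (j+1) → g) = Fin.cons x w ∘ ρ' := by
  refine ⟨Equiv.Perm.decomposeFin.symm (0, ρ), ?_⟩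
  funext m
  refine Fin.cases ?_ (fun m => ?_) m <;> simp

theorem IsAlt.kW {W : Wt F g} (hW : IsAlt W) (x : g) : IsAlt (kW x W) where
  wa i j v t w a b := by simp only [kW_apply, Fin.cons_update]; exact hW.wa _ _ _ _ _ _ _
  ws i j v t w a b := by simp only [kW_apply, Fin.cons_update]; exact hW.ws _ _ _ _ _ _ _
  alt i j v t t' w h1 h2 := hW.alt _ _ _ t t' _ h1 h2
  va i j v w r a b := hW.va _ _ _ _ _ _ _
  vs i j v w r a b := hW.vs _ _ _ _ _ _ _
  sym i j v w ρ := by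
    rw [kW_apply, kW_apply]
    obtain ⟨ρ', h⟩ := cons_comp_perm x w ρ
    rw [h, hW.sym]

theorem IsAlt.iW_add {W : Wt F g} (hW : IsAlt W) (x y : g) :
    WeilAux.iW (x + y) W = WeilAux.iW x W + WeilAux.iW y W := by
  funext i j v w
  have := hW.va (i+1) j (Fin.cons 0 v) 0 x y w
  simpa [iW_apply] using this

theorem IsAlt.iW_smul {W : Wt F g} (hW : IsAlt W) (s : F) (y : g) :
    WeilAux.iW (s • y) W = s • WeilAux.iW y W := by
  funext i j v w
  have := hW.vs (i+1) j (Fin.cons 0 v) 0 s y w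
  simpa [iW_apply] using this

theorem IsAlt.kW_add {W : Wt F g} (hW : IsAlt W) (x y : g) :
    WeilAux.kW (x + y) W = WeilAux.kW x W + WeilAux.kW y W := by
  funext i j v w
  have := hW.wa i (j+1) v (Fin.cons 0 w) 0 x y
  simpa [kW_apply] using this

theorem IsAlt.kW_smul {W : Wt F g} (hW : IsAlt W) (s : F) (y : g) :
    WeilAux.kW (s • y) W = s • WeilAux.kW y W := by
  funext i j v w
  have := hW.ws i (j+1) v (Fin.cons 0 w) 0 s y
  simpa [kW_apply] using this

theorem IsAlt.iW_iW {W : Wt F g} (hW : IsAlt W) (x : g) :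
    WeilAux.iW x (WeilAux.iW x W) = 0 := by
  funext i j v w
  exact hW.alt (i+2) j _ 0 1 w (by simp) rfl

theorem IsAlt.kW_kW {W : Wt F g} (hW : IsAlt W) (x y : g) :
    WeilAux.kW x (WeilAux.kW y W) = WeilAux.kW y (WeilAux.kW x W) := by
  funext i j v w
  simp only [kW_apply]
  rw [← hW.sym _ _ _ _ (Equiv.swap 0 1)]
  congr 1
  funext m
  refine Fin.cases ?_ (fun m => Fin.cases ?_ (fun m => ?_) m) m
  · simp
  · simp
  · have : Equiv.swap (0 : Fin (j+2)) 1 m.succ.succ = m.succ.succ :=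
      Equiv.swap_apply_of_ne_of_ne (by simp) (by simp [Fin.ext_iff])
    simp only [Function.comp, this, Fin.cons_succ]

theorem IsAlt.add {W W' : Wt F g} (hW : IsAlt W) (hW' : IsAlt W') : IsAlt (W + W') where
  va i j v t a b w := by simp only [Pi.add_apply, hW.va, hW'.va]; ring
  vs i j v t a b w := by simp only [Pi.add_apply, hW.vs, hW'.vs]; ring
  alt i j v t t' w h1 h2 := by
    simp only [Pi.add_apply, hW.alt _ _ _ _ _ w h1 h2, hW'.alt _ _ _ _ _ w h1 h2, add_zero]
  wa i j v t a b w := by simp only [Pi.add_apply, hW.wa, hW'.wa]; ring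
  ws i j v t a b w := by simp only [Pi.add_apply, hW.ws, hW'.ws]; ring
  sym i j v t w := by simp only [Pi.add_apply, hW.sym, hW'.sym]

theorem IsAlt.smul {W : Wt F g} (s : F) (hW : IsAlt W) : IsAlt (s • W) where
  va i j v t a b w := by simp only [Pi.smul_apply, smul_eq_mul, hW.va]; ring
  vs i j v t a b w := by simp only [Pi.smul_apply, smul_eq_mul, hW.vs]; ring
  alt i j v t t' w h1 h2 := by
    simp only [Pi.smul_apply, smul_eq_mul, hW.alt _ _ _ _ _ w h1 h2, mul_zero]
  wa i j v t a b w := by simp only [Pi.smul_apply, smul_eq_mul, hW.wa]; ring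
  ws i j v t a b w := by simp only [Pi.smul_apply, smul_eq_mul, hW.ws]; ring
  sym i j v t w := by simp only [Pi.smul_apply, smul_eq_mul, hW.sym]

theorem IsAlt.zero : IsAlt (0 : Wt F g) := by
  constructor <;> intros <;> simp

variable (F g) in
/-- submodule version -/
def Alt : Submodule F (Wt F g) where
  carrier := {W | IsAlt W}
  add_mem' := IsAlt.add
  zero_mem' := IsAlt.zero
  smul_mem' s _ := IsAlt.smul s

theorem mem_Alt {W : Wt F g} : W ∈ Alt F g ↔ IsAlt W := Iff.rfl

end Ops
end WeilAux
namespace WeilAux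

section Pres

variable {F : Type*} [Field F] {g : Type*} [LieRing g] [LieAlgebra F g]

theorem exists_alt_of_closed {S : Set (Wt F g)} (hi : ∀ c ∈ S, ∀ x, iW x c ∈ S)
    (ia : ∀ c ∈ S, ∀ x y, iW (x + y) c = iW x c + iW y c)
    (is : ∀ c ∈ S, ∀ (s : F) y, iW (s • y) c = s • iW y c)
    (ii : ∀ c ∈ S, ∀ x, iW x (iW x c) = 0) (i : ℕ) :
    ∀ c ∈ S, ∀ j (w : Fin j → g), ∃ a : g [⋀^Fin i]→ₗ[F] F, ∀ v, a v = c i j v w := by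
  induction i with
  | zero =>
    intro c hc j w
    refine ⟨⟨⟨fun v => c 0 j v w, ?_, ?_⟩, ?_⟩, fun v => rfl⟩
    · intro _ _ t; exact t.elim0
    · intro _ _ t; exact t.elim0
    · intro _ t; exact t.elim0
  | succ i ih =>
    intro c hc j w
    have key : ∀ x, ∃ a : g [⋀^Fin i]→ₗ[F] F, ∀ v, a v = c (i+1) j (Fin.cons x v) w :=
      fun x => ih _ (hi c hc x) j w
    have hupd : ∀ (v : Fin (i+1) → g) (t : Fin i) (y : g), Function.update v t.succ y
        = Fin.cons (v 0) (Function.update (Fin.tail v) t y) := by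
      intro v t y
      rw [Fin.cons_update, Fin.cons_self_tail]
    have hupd0 : ∀ (v : Fin (i+1) → g) (y : g), Function.update v 0 y
        = Fin.cons y (Fin.tail v) := by
      intro v y
      conv_lhs => rw [← Fin.cons_self_tail v]
      rw [Fin.update_cons_zero]
    have alt0 : ∀ (v : Fin (i+1) → g) (s : Fin i), v 0 = v s.succ → c (i+1) j v w = 0 := by
      intro v s hs
      obtain ⟨a, ha⟩ := key (v 0)
      rw [← Fin.cons_self_tail v, ← ha]
      obtain ⟨i, rfl⟩ : ∃ k, i = k + 1 := ⟨i - 1, by have := s.2; omega⟩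
      have h0 : a (Fin.tail v ∘ Equiv.swap s 0) = 0 := by
        rw [ha]
        have := congrFun (congrFun (congrFun (congrFun (ii c hc (v 0)) i) j)
          (Fin.tail (Fin.tail v ∘ Equiv.swap s 0))) w
        simp only [iW_apply] at this
        rw [← Fin.cons_self_tail (Fin.tail v ∘ Equiv.swap s 0)]
        refine Eq.trans ?_ this
        congr 3
        simp [Fin.tail, hs]
      rw [AlternatingMap.map_perm] at h0
      rcases Int.units_eq_one_or (Equiv.Perm.sign (Equiv.swap s 0)) with h1 | h1 <;>
        simpa [h1] using h0
    refine ⟨⟨⟨fun v => c (i+1) j v w, ?_, ?_⟩, ?_⟩, fun v => rfl⟩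
    · intro inst v t x y
      have : inst = instDecidableEqFin (i+1) := Subsingleton.elim _ _
      subst this
      refine Fin.cases ?_ (fun t => ?_) t
      · simp only [hupd0]
        exact congrFun (congrFun (congrFun (congrFun (ia c hc x y) i) j) (Fin.tail v)) w
      · obtain ⟨a, ha⟩ := key (v 0)
        simp only [hupd, ← ha]
        exact a.map_update_add _ _ _ _
    · intro inst v t x y
      have : inst = instDecidableEqFin (i+1) := Subsingleton.elim _ _
      subst this
      refine Fin.cases ?_ (fun t => ?_) t
      · simp only [hupd0]
        exact congrFun (congrFun (congrFun (congrFun (is c hc x y) i) j) (Fin.tail v)) w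
      · obtain ⟨a, ha⟩ := key (v 0)
        simp only [hupd, ← ha]
        exact a.map_update_smul _ _ _ _
    · intro v t t'
      refine Fin.cases ?_ (fun t => ?_) t <;> refine Fin.cases ?_ (fun t' => ?_) t'
      · intro _ h; exact absurd rfl h
      · intro h _; exact alt0 v _ h
      · intro h _; exact alt0 v _ h.symm
      · intro h hne
        obtain ⟨a, ha⟩ := key (v 0)
        change c (i+1) j v w = 0
        rw [← Fin.cons_self_tail v, ← ha]
        exact a.map_eq_zero_of_eq _ h (by simpa using hne)

theorem exists_sym_of_closed {S : Set (Wt F g)} (hk : ∀ c ∈ S, ∀ x, kW x c ∈ S)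
    (ka : ∀ c ∈ S, ∀ x y, kW (x + y) c = kW x c + kW y c)
    (ks : ∀ c ∈ S, ∀ (s : F) y, kW (s • y) c = s • kW y c)
    (kk : ∀ c ∈ S, ∀ x y, kW x (kW y c) = kW y (kW x c)) (j : ℕ) :
    ∀ c ∈ S, ∀ i (v : Fin i → g), 
      (∀ (w : Fin j → g) (r : Fin j) (x y : g), c i j v (Function.update w r (x + y))
        = c i j v (Function.update w r x) + c i j v (Function.update w r y)) ∧
      (∀ (w : Fin j → g) (r : Fin j) (s : F) (x : g),
        c i j v (Function.update w r (s • x)) = s * c i j v (Function.update w r x)) ∧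
      (∀ (w : Fin j → g) (ρ : Equiv.Perm (Fin j)), c i j v (w ∘ ρ) = c i j v w) := by
  induction j with
  | zero =>
    intro c hc i v
    refine ⟨fun _ r => r.elim0, fun _ r => r.elim0, fun w ρ => ?_⟩
    congr 1
    funext r; exact r.elim0
  | succ j ih =>
    intro c hc i v
    have key : ∀ x, _ := fun x => ih _ (hk c hc x) i v
    simp only [kW_apply] at key
    have hupd : ∀ (v : Fin (j+1) → g) (t : Fin j) (y : g), Function.update v t.succ y
        = Fin.cons (v 0) (Function.update (Fin.tail v) t y) := by
      intro v t y
      rw [Fin.cons_update, Fin.cons_self_tail]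
    have hupd0 : ∀ (v : Fin (j+1) → g) (y : g), Function.update v 0 y
        = Fin.cons y (Fin.tail v) := by
      intro v y
      conv_lhs => rw [← Fin.cons_self_tail v]
      rw [Fin.update_cons_zero]
    refine ⟨?_, ?_, ?_⟩
    · intro w t x y
      refine Fin.cases ?_ (fun t => ?_) t
      · simp only [hupd0]
        exact congrFun (congrFun (congrFun (congrFun (ka c hc x y) i) j) v) (Fin.tail w)
      · simp only [hupd]
        exact (key _).1 _ _ _ _
    · intro w t x y
      refine Fin.cases ?_ (fun t => ?_) t
      · simp only [hupd0]
        exact congrFun (congrFun (congrFun (congrFun (ks c hc x y) i) j) v) (Fin.tail w)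
      · simp only [hupd]
        exact (key _).2.1 _ _ _ _
    · intro w ρ
      have hρ : ρ ∈ Submonoid.closure
          (Set.range fun i : Fin j ↦ Equiv.swap i.castSucc i.succ) := by
        rw [Equiv.Perm.mclosure_swap_castSucc_succ]; trivial
      induction hρ using Submonoid.closure_induction generalizing w with
      | one => rfl
      | mul a b _ _ ha hb =>
        rw [Equiv.Perm.coe_mul, ← Function.comp_assoc, hb, ha]
      | mem a ha =>
        obtain ⟨t, rfl⟩ := ha
        obtain ⟨j, rfl⟩ : ∃ k, j = k + 1 := ⟨j - 1, by have := t.2; omega⟩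
        refine Fin.cases ?_ (fun t => ?_) t
        · have := congrFun (congrFun (congrFun (congrFun (kk c hc (w 1) (w 0)) i) j) v)
            (Fin.tail (Fin.tail w))
          simp only [kW_apply] at this
          have e1 : (Fin.cons (w 0) (Fin.cons (w 1) (Fin.tail (Fin.tail w))) : Fin (j+2) → g) = w := by
            conv_rhs => rw [← Fin.cons_self_tail w, ← Fin.cons_self_tail (Fin.tail w)]
            rfl
          rw [e1] at this
          rw [this]
          congr 1
          funext m
          refine Fin.cases ?_ (fun m => Fin.cases ?_ (fun m => ?_) m) m
          · simp
          · simp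
          · have : Equiv.swap (0 : Fin (j+2)) 1 m.succ.succ = m.succ.succ :=
              Equiv.swap_apply_of_ne_of_ne (by simp) (by simp [Fin.ext_iff])
            simp [Function.comp, this, Fin.tail]
        · have := (key (w 0)).2.2 (Fin.tail w) (Equiv.swap t.castSucc t.succ)
          rw [Fin.cons_self_tail] at this
          rw [← this]
          congr 1
          funext m
          refine Fin.cases ?_ (fun m => ?_) m
          · have : Equiv.swap t.succ.castSucc t.succ.succ 0 = 0 :=
              Equiv.swap_apply_of_ne_of_ne (by simp [Fin.ext_iff]) (by simp [Fin.ext_iff])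
            simp only [Function.comp, this, Fin.cons_zero]
          · simp only [Function.comp, Fin.cons_succ, Fin.tail]
            congr 1
            rw [← Fin.succ_castSucc]
            exact ((Fin.succ_injective _).swap_apply _ _ _)

theorem alt_of_closed {S : Set (Wt F g)} (hi : ∀ c ∈ S, ∀ x, iW x c ∈ S)
    (hk : ∀ c ∈ S, ∀ x, kW x c ∈ S)
    (ia : ∀ c ∈ S, ∀ x y, iW (x + y) c = iW x c + iW y c)
    (is : ∀ c ∈ S, ∀ (s : F) y, iW (s • y) c = s • iW y c)
    (ii : ∀ c ∈ S, ∀ x, iW x (iW x c) = 0)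
    (ka : ∀ c ∈ S, ∀ x y, kW (x + y) c = kW x c + kW y c)
    (ks : ∀ c ∈ S, ∀ (s : F) y, kW (s • y) c = s • kW y c)
    (kk : ∀ c ∈ S, ∀ x y, kW x (kW y c) = kW y (kW x c)) : ∀ c ∈ S, IsAlt c := by
  intro c hc
  have h1 := fun i => exists_alt_of_closed hi ia is ii i c hc
  have h2 := fun j => exists_sym_of_closed hk ka ks kk j c hc
  refine ⟨?_, ?_, ?_, fun i j v w => (h2 j i v).1 w, fun i j v w => (h2 j i v).2.1 w,
    fun i j v w => (h2 j i v).2.2 w⟩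
  · intro i j v t x y w
    obtain ⟨a, ha⟩ := h1 i j w
    simp only [← ha]; exact a.map_update_add _ _ _ _
  · intro i j v t x y w
    obtain ⟨a, ha⟩ := h1 i j w
    simp only [← ha]; exact a.map_update_smul _ _ _ _
  · intro i j v t t' w hne h
    obtain ⟨a, ha⟩ := h1 i j w
    simp only [← ha]; exact a.map_eq_zero_of_eq _ h hne

/-- moving an argument to the front -/
theorem IsAlt.cons_succAbove {W : Wt F g} (hW : IsAlt W) (i j) (v : Fin (i+1) → g) (l : Fin (i+1))
    (x : g) (w : Fin j → g) :
    W (i+1) j (Fin.cons x (v ∘ l.succAbove)) w = (-1 : F)^l.1 * W (i+1) j (Function.update v l x) w := by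
  have := (hW.toAlt (i+1) j w).neg_one_pow_smul_map_insertNth l x (v ∘ l.succAbove)
  have e : (l.insertNth x (v ∘ l.succAbove) : Fin (i+1) → g) = Function.update v l x := by
    have := Fin.insertNth_removeNth (α := fun _ => g) l x v
    exact this
  rw [e] at this
  refine Eq.trans (show _ = _ from this.symm) ?_
  change (-1 : ℤ)^l.1 • W (i+1) j (Function.update v l x) w = _
  simp

theorem IsAlt.wcons_succAbove {W : Wt F g} (hW : IsAlt W) (i j) (v : Fin i → g) (l : Fin (j+1))
    (x : g) (w : Fin (j+1) → g) :
    W i (j+1) v (Fin.cons x (w ∘ l.succAbove)) = W i (j+1) v (Function.update w l x) := by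
  have e : (Fin.cons x (w ∘ l.succAbove) : Fin (j+1) → g) = Function.update w l x ∘ l.cycleRange.symm := by
    funext m
    refine Fin.cases ?_ (fun m => ?_) m
    · simp [Function.comp, Fin.cycleRange_symm_zero]
    · simp [Function.comp, Fin.cycleRange_symm_succ, Fin.succAbove_ne]
  rw [e]; exact hW.sym _ _ _ _ _

theorem IsAlt.cons_cons {W : Wt F g} (hW : IsAlt W) (x y : g) :
    WeilAux.iW x (WeilAux.iW y W) = - WeilAux.iW y (WeilAux.iW x W) := by
  have h := hW.iW_iW (x + y)
  rw [hW.iW_add, map_add, (hW.iW x).iW_add, (hW.iW y).iW_add, hW.iW_iW, hW.iW_iW] at h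
  rw [zero_add, add_zero] at h
  exact (neg_eq_of_add_eq_zero_right h).symm

theorem pairTuple_zero {k : ℕ} (x br : g) (v : Fin (k+1) → g) (l : Fin (k+1)) :
    pairTupleW (k+1) (Fin.cons x v) br 0 l.succ = Fin.cons br (v ∘ l.succAbove) := by
  funext m
  refine Fin.cases ?_ (fun m => ?_) m
  · simp [pairTupleW]
  · simp only [pairTupleW, Fin.val_succ, Fin.cons_succ, Function.comp, Fin.succAbove, Fin.lt_def]
    rw [dif_neg (by simp), dif_neg (by simp)]
    simp only [Fin.val_castSucc]
    by_cases h : m.1 < l.1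
    · rw [dif_pos (by omega), if_pos h]
      rfl
    · rw [dif_neg (by omega), if_neg h]
      rfl

theorem pairTuple_br {k : ℕ} (br : g) (v : Fin (k+2) → g) (i l : Fin (k+2)) :
    pairTupleW (k+1) v br i l = Fin.cons br (Fin.tail (pairTupleW (k+1) v br i l)) := by
  conv_lhs => rw [← Fin.cons_self_tail (pairTupleW (k+1) v br i l)]
  rfl

theorem pairTuple_succ {k : ℕ} (x br : g) (v : Fin (k+2) → g) (i l : Fin (k+2)) :
    pairTupleW (k+2) (Fin.cons x v) br i.succ l.succ
      = Fin.cons br (Fin.cons x (Fin.tail (pairTupleW (k+1) v br i l))) := by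
  funext m
  refine Fin.cases ?_ (fun m => Fin.cases ?_ (fun m => ?_) m) m
  · simp [pairTupleW]
  · rfl
  · simp only [pairTupleW, Fin.val_succ, Fin.cons_succ, Fin.tail]
    split_ifs <;> first | (exfalso; omega) | rfl

/-- Cartan formula for the Chevalley-Eilenberg differential -/
theorem IsAlt.iW_dL {c : Wt F g} (hc : IsAlt c) (x : g) :
    WeilAux.iW x (dL c) = LW x c - dL (WeilAux.iW x c) := by
  funext k j v w
  simp only [iW_apply, Pi.sub_apply]
  have h1 : dL c (k+1) j (Fin.cons x v) w = dLieS F g k j (c k j) (Fin.cons x v) w := rfl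
  rw [h1, dLieS]
  cases k with
  | zero =>
    have h2 : dL (WeilAux.iW x c) 0 j v w = 0 := rfl
    rw [h2]
    simp [LW]
  | succ k =>
    have h2 : dL (WeilAux.iW x c) (k+1) j v w = dLieS F g k j (WeilAux.iW x c k j) v w := rfl
    rw [h2, dLieS]
    rw [Fin.sum_univ_succ, Fin.sum_univ_succ (n := k+1), cons_zero_comp]
    have hA : ∀ i : Fin (k+1), (-1 : F)^(i.succ.1+1) * ∑ r : Fin j, c (k+1) j
        ((Fin.cons x v : Fin (k+2) → g) ∘ i.succ.succAbove)
        (Function.update w r ⁅(Fin.cons x v : Fin (k+2) → g) i.succ, w r⁆)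
        = - ((-1 : F)^(i.1+1) * ∑ r : Fin j, WeilAux.iW x c k j (v ∘ i.succAbove)
          (Function.update w r ⁅v i, w r⁆)) := by
      intro i
      simp only [cons_succ_comp, Fin.cons_succ, iW_apply, Fin.val_succ]
      ring
    have hB : ∀ l : Fin (k+1), (if (0 : Fin (k+2)) < l.succ then (-1 : F)^((0 : Fin (k+2)).1+l.succ.1) *
        c (k+1) j (pairTupleW (k+1) (Fin.cons x v)
          ⁅(Fin.cons x v : Fin (k+2) → g) 0, (Fin.cons x v : Fin (k+2) → g) l.succ⁆ 0 l.succ) w else 0)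
        = - c (k+1) j (Function.update v l ⁅x, v l⁆) w := by
      intro l
      rw [if_pos (Fin.succ_pos l), pairTuple_zero, hc.cons_succAbove]
      simp only [Fin.val_zero, Fin.val_succ, Fin.cons_zero, Fin.cons_succ, zero_add, pow_succ]
      rw [← mul_assoc, mul_neg_one, neg_mul, ← mul_pow]
      simp
    have hC : ∀ i l : Fin (k+1), (if i.succ < l.succ then (-1 : F)^(i.succ.1+l.succ.1) *
        c (k+1) j (pairTupleW (k+1) (Fin.cons x v)
          ⁅(Fin.cons x v : Fin (k+2) → g) i.succ, (Fin.cons x v : Fin (k+2) → g) l.succ⁆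
            i.succ l.succ) w else 0)
        = - (if i < l then (-1 : F)^(i.1+l.1) * WeilAux.iW x c k j (pairTupleW k v ⁅v i, v l⁆ i l) w
            else 0) := by
      intro i l
      by_cases hil : i < l
      · rw [if_pos hil, if_pos (by simpa using hil)]
        obtain ⟨k, rfl⟩ : ∃ k', k = k' + 1 :=
          ⟨k - 1, by have := l.2; have := Fin.lt_def.1 hil; omega⟩
        rw [pairTuple_succ]
        have := congrFun (congrFun (congrFun (congrFun (hc.cons_cons ⁅v i, v l⁆ x) k) j)
          (Fin.tail (pairTupleW (k+1) v ⁅v i, v l⁆ i l))) w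
        simp only [iW_apply, Pi.neg_apply] at this
        simp only [Fin.cons_succ, iW_apply]
        rw [← pairTuple_br] at this
        rw [this]
        simp only [Fin.val_succ]
        ring
      · rw [if_neg hil, if_neg (by simpa using hil), neg_zero]
    have hD : ∀ i : Fin (k+2), ¬ i < 0 := by intro i; simp
    simp only [hA]
    rw [Fin.sum_univ_succ (n := k+1)]
    simp only [hB, Fin.sum_univ_succ (n := k+1) (f := fun l => ite (Fin.succ _ < l) _ _), hC]
    simp only [if_neg (hD _), zero_add, Finset.sum_neg_distrib, LW, LinearMap.coe_mk, AddHom.coe_mk,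
      Fin.cons_zero, Fin.val_zero]
    ring

theorem kW_dL (y : g) (c : Wt F g) :
    kW y (dL c) = dL (kW y c) - AW (fun z => kW ⁅z, y⁆ c) := by
  funext k j v w
  cases k with
  | zero => simp only [Pi.sub_apply, kW_apply, AW_zero, dL_zero]; simp
  | succ k =>
    have h1 : kW y (dL c) (k+1) j v w = dLieS F g k (j+1) (c k (j+1)) v (Fin.cons y w) := rfl
    have h2 : dL (kW y c) (k+1) j v w = dLieS F g k j (kW y c k j) v w := rfl
    have h3 : AW (fun z => kW ⁅z, y⁆ c) (k+1) j v w = ∑ t : Fin (k+1), (-1 : F)^t.1 *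
      kW ⁅v t, y⁆ c k j (v ∘ t.succAbove) w := rfl
    simp only [Pi.sub_apply]
    rw [h1, h2, h3, dLieS, dLieS]
    simp only [Fin.sum_univ_succ (n := j), Fin.cons_zero, Fin.update_cons_zero, Fin.cons_succ,
      kW_apply, Fin.cons_update, mul_add, Finset.sum_add_distrib]
    rw [add_sub_right_comm, sub_eq_neg_add, ← Finset.sum_neg_distrib]
    congr 3
    funext i
    ring

theorem IsAlt.iW_dK {c : Wt F g} (hc : IsAlt c) (x : g) :
    WeilAux.iW x (dK c) = - dK (WeilAux.iW x c) := by
  rw [dK_apply, iW_mW, dK_apply, ← map_neg]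
  congr 1
  funext y
  exact hc.cons_cons x y

theorem IsAlt.AW (f : g →ₗ[F] Wt F g) (hf : ∀ y, IsAlt (f y)) : IsAlt (AW (fun y => f y)) := by
  have key : ∀ c ∈ {c : Wt F g | ∃ (b : Wt F g) (f : g →ₗ[F] Wt F g), IsAlt b ∧ (∀ y, IsAlt (f y)) ∧
      c = b + WeilAux.AW (fun y => f y)}, IsAlt c := by
    have lin : ∀ (f : g →ₗ[F] Wt F g), (∀ y, IsAlt (f y)) → 
       (∀ x y, (fun z => WeilAux.iW (x+y) (f z)) = (fun z => WeilAux.iW x (f z)) + (fun z => WeilAux.iW y (f z))) ∧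
       (∀ (x : F) y, (fun z => WeilAux.iW (x • y) (f z)) = x • (fun z => WeilAux.iW y (f z))) ∧
       (∀ x y, (fun z => WeilAux.kW (x+y) (f z)) = (fun z => WeilAux.kW x (f z)) + (fun z => WeilAux.kW y (f z))) ∧
       (∀ (x : F) y, (fun z => WeilAux.kW (x • y) (f z)) = x • (fun z => WeilAux.kW y (f z))) := by
      intro f hf
      refine ⟨?_, ?_, ?_, ?_⟩ <;> intro x y <;> funext z
      · exact (hf z).iW_add x y
      · exact (hf z).iW_smul x y
      · exact (hf z).kW_add x y
      · exact (hf z).kW_smul x y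
    apply alt_of_closed
    · rintro _ ⟨b, f, hb, hf, rfl⟩ x
      refine ⟨WeilAux.iW x b + f x, -((WeilAux.iW x).comp f), (hb.iW x).add (hf x), ?_, ?_⟩
      · intro y
        exact (Alt F g).neg_mem ((hf y).iW x)
      · rw [map_add, iW_AW, add_assoc, sub_eq_add_neg, ← map_neg]
        rfl
    · rintro _ ⟨b, f, hb, hf, rfl⟩ x
      refine ⟨WeilAux.kW x b, ((WeilAux.kW x).comp f), (hb.kW x), ?_, ?_⟩
      · intro y
        exact ((hf y).kW x)
      · rw [map_add, kW_AW]
        rfl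
    · rintro _ ⟨b, f, hb, hf, rfl⟩ x y
      simp only [map_add, iW_AW, hb.iW_add, (lin f hf).1]
      abel
    · rintro _ ⟨b, f, hb, hf, rfl⟩ x y
      simp only [map_add, iW_AW, hb.iW_smul, (lin f hf).2.1, map_smul, smul_add, smul_sub]
    · rintro _ ⟨b, f, hb, hf, rfl⟩ x
      simp only [map_add, iW_AW, hb.iW_iW, map_sub, (hf _).iW_iW]
      rw [show (fun _ => 0 : g → Wt F g) = 0 from rfl, map_zero]
      abel
    · rintro _ ⟨b, f, hb, hf, rfl⟩ x y
      simp only [map_add, kW_AW, hb.kW_add, (lin f hf).2.2.1]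
      abel
    · rintro _ ⟨b, f, hb, hf, rfl⟩ x y
      simp only [map_add, kW_AW, hb.kW_smul, (lin f hf).2.2.2, map_smul, smul_add]
    · rintro _ ⟨b, f, hb, hf, rfl⟩ x y
      simp only [map_add, kW_AW, hb.kW_kW x y, (hf _).kW_kW x y]
  exact key _ ⟨0, f, IsAlt.zero, hf, by simp⟩

theorem IsAlt.kLin {c : Wt F g} (hc : IsAlt c) (φ : g →ₗ[F] g) :
    ∃ f : g →ₗ[F] Wt F g, ∀ y, f y = WeilAux.kW (φ y) c :=
  ⟨⟨⟨fun y => WeilAux.kW (φ y) c, fun x y => by rw [map_add, hc.kW_add]⟩,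
    fun x y => by simp [hc.kW_smul]⟩, fun y => rfl⟩

theorem IsAlt.AWk {c : Wt F g} (hc : IsAlt c) (φ : g →ₗ[F] g) :
    IsAlt (WeilAux.AW (fun y => WeilAux.kW (φ y) c)) := by
  obtain ⟨f, hf⟩ := hc.kLin φ
  simp only [← hf]
  exact IsAlt.AW f (fun y => by rw [hf]; exact hc.kW _)

theorem IsAlt.AWe {c : Wt F g} (hc : IsAlt c) (α : g →ₗ[F] F) :
    IsAlt (WeilAux.AW (fun y => α y • c)) :=
  IsAlt.AW (α.smulRight c) (fun y => hc.smul _)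

theorem IsAlt.LW {c : Wt F g} (hc : IsAlt c) (u : g) : IsAlt (LW u c) := by
  have key : ∀ c ∈ {c : Wt F g | ∃ (b d : Wt F g), IsAlt b ∧ IsAlt d ∧
      c = b + WeilAux.LW u d}, IsAlt c := by
    apply alt_of_closed
    · rintro _ ⟨b, d, hb, hd, rfl⟩ x
      refine ⟨WeilAux.iW x b - WeilAux.iW ⁅u, x⁆ d, WeilAux.iW x d,
        (Alt F g).sub_mem (hb.iW x) (hd.iW _), hd.iW x, ?_⟩
      rw [map_add, iW_LW]; abel
    · rintro _ ⟨b, d, hb, hd, rfl⟩ x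
      refine ⟨WeilAux.kW x b - WeilAux.kW ⁅u, x⁆ d, WeilAux.kW x d,
        (Alt F g).sub_mem (hb.kW x) (hd.kW _), hd.kW x, ?_⟩
      rw [map_add, kW_LW]; abel
    · rintro _ ⟨b, d, hb, hd, rfl⟩ x y
      simp only [map_add, iW_LW, hb.iW_add, hd.iW_add, lie_add]
      abel
    · rintro _ ⟨b, d, hb, hd, rfl⟩ x y
      simp only [map_add, iW_LW, hb.iW_smul, hd.iW_smul, lie_smul, map_smul, smul_add, smul_sub]
    · rintro _ ⟨b, d, hb, hd, rfl⟩ x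
      simp only [map_add, iW_LW, hb.iW_iW, hd.iW_iW, map_sub, map_zero]
      rw [hd.cons_cons x]; abel
    · rintro _ ⟨b, d, hb, hd, rfl⟩ x y
      simp only [map_add, kW_LW, hb.kW_add, hd.kW_add, lie_add]
      abel
    · rintro _ ⟨b, d, hb, hd, rfl⟩ x y
      simp only [map_add, kW_LW, hb.kW_smul, hd.kW_smul, lie_smul, map_smul, smul_add, smul_sub]
    · rintro _ ⟨b, d, hb, hd, rfl⟩ x y
      simp only [map_add, kW_LW, map_sub, map_zero]
      rw [hb.kW_kW x y, hd.kW_kW x y, hd.kW_kW x ⁅u, y⁆, hd.kW_kW y ⁅u, x⁆]; abel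
  exact key _ ⟨0, c, IsAlt.zero, hc, by simp⟩

theorem IsAlt.LW_add {c : Wt F g} (hc : IsAlt c) (x y : g) :
    WeilAux.LW (x + y) c = WeilAux.LW x c + WeilAux.LW y c := by
  funext i j v w
  simp only [WeilAux.LW, LinearMap.coe_mk, AddHom.coe_mk, Pi.add_apply, add_lie, hc.va, hc.wa,
    Finset.sum_add_distrib]
  ring

theorem IsAlt.LW_smul {c : Wt F g} (hc : IsAlt c) (s : F) (y : g) :
    WeilAux.LW (s • y) c = s • WeilAux.LW y c := by
  funext i j v w
  simp only [WeilAux.LW, LinearMap.coe_mk, AddHom.coe_mk, Pi.smul_apply, smul_lie, hc.vs, hc.ws,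
    ← Finset.mul_sum, smul_eq_mul]
  ring

theorem IsAlt.dK {c : Wt F g} (hc : IsAlt c) : IsAlt (dK c) := by
  have key : ∀ c ∈ {c : Wt F g | ∃ (b d : Wt F g), IsAlt b ∧ IsAlt d ∧
      c = b + WeilAux.dK d}, IsAlt c := by
    apply alt_of_closed
    · rintro _ ⟨b, d, hb, hd, rfl⟩ x
      refine ⟨WeilAux.iW x b, -WeilAux.iW x d, hb.iW x, (Alt F g).neg_mem (hd.iW x), ?_⟩
      rw [map_add, hd.iW_dK, map_neg]
    · rintro _ ⟨b, d, hb, hd, rfl⟩ x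
      refine ⟨WeilAux.kW x b + WeilAux.iW x d, WeilAux.kW x d, (hb.kW x).add (hd.iW x), hd.kW x, ?_⟩
      rw [map_add, kW_dK]; abel
    · rintro _ ⟨b, d, hb, hd, rfl⟩ x y
      simp only [map_add, hd.iW_dK, hb.iW_add, hd.iW_add]
      abel
    · rintro _ ⟨b, d, hb, hd, rfl⟩ x y
      simp only [map_add, hd.iW_dK, hb.iW_smul, hd.iW_smul, map_smul, smul_add, smul_neg]
    · rintro _ ⟨b, d, hb, hd, rfl⟩ x
      simp only [map_add, hd.iW_dK, hb.iW_iW, (hd.iW x).iW_dK, map_neg, hd.iW_iW, map_zero]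
      simp
    · rintro _ ⟨b, d, hb, hd, rfl⟩ x y
      simp only [map_add, kW_dK, hb.kW_add, hd.kW_add, hd.iW_add]
      abel
    · rintro _ ⟨b, d, hb, hd, rfl⟩ x y
      simp only [map_add, kW_dK, hb.kW_smul, hd.kW_smul, hd.iW_smul, map_smul, smul_add]
    · rintro _ ⟨b, d, hb, hd, rfl⟩ x y
      simp only [map_add, kW_dK, iW_kW]
      rw [hb.kW_kW x y, hd.kW_kW x y]; abel
  exact key _ ⟨0, c, IsAlt.zero, hc, by simp⟩

/-- the linear map `z ↦ [z,y]` -/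
def rad (y : g) : g →ₗ[F] g := -(LieAlgebra.ad F g y : g →ₗ[F] g)

theorem rad_apply (y z : g) : rad (F := F) y z = ⁅z, y⁆ := by
  simp [rad]

theorem IsAlt.AWr {c : Wt F g} (hc : IsAlt c) (y : g) :
    IsAlt (WeilAux.AW (fun z => WeilAux.kW ⁅z, y⁆ c)) := by
  have := hc.AWk (rad (F := F) y)
  simpa only [rad_apply] using this

theorem IsAlt.dL {c : Wt F g} (hc : IsAlt c) : IsAlt (dL c) := by
  have key : ∀ c ∈ {c : Wt F g | ∃ (b d : Wt F g), IsAlt b ∧ IsAlt d ∧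
      c = b + WeilAux.dL d}, IsAlt c := by
    apply alt_of_closed
    · rintro _ ⟨b, d, hb, hd, rfl⟩ x
      refine ⟨WeilAux.iW x b + WeilAux.LW x d, -WeilAux.iW x d, (hb.iW x).add (hd.LW x),
        (Alt F g).neg_mem (hd.iW x), ?_⟩
      rw [map_add, hd.iW_dL, map_neg]; abel
    · rintro _ ⟨b, d, hb, hd, rfl⟩ x
      refine ⟨WeilAux.kW x b - WeilAux.AW (fun z => WeilAux.kW ⁅z, x⁆ d), WeilAux.kW x d,
        (Alt F g).sub_mem (hb.kW x) (hd.AWr x), hd.kW x, ?_⟩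
      rw [map_add, kW_dL]; abel
    · rintro _ ⟨b, d, hb, hd, rfl⟩ x y
      simp only [map_add, hd.iW_dL, hb.iW_add, hd.iW_add, hd.LW_add]
      abel
    · rintro _ ⟨b, d, hb, hd, rfl⟩ x y
      simp only [map_add, hd.iW_dL, hb.iW_smul, hd.iW_smul, map_smul, smul_add, smul_sub, hd.LW_smul]
    · rintro _ ⟨b, d, hb, hd, rfl⟩ x
      simp only [map_add, hd.iW_dL, hb.iW_iW, (hd.iW x).iW_dL, map_sub, hd.iW_iW, map_zero, iW_LW,
        lie_self]
      have : WeilAux.iW 0 d = 0 := by have := hd.iW_smul 0 0; simpa using this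
      rw [this]; abel
    · rintro _ ⟨b, d, hb, hd, rfl⟩ x y
      have : (fun z : g => WeilAux.kW ⁅z, x⁆ d + WeilAux.kW ⁅z, y⁆ d) = (fun z : g => WeilAux.kW (⁅z, x⁆) d)
          + (fun z : g => WeilAux.kW (⁅z, y⁆) d) := by
        rfl
      simp only [map_add, kW_dL, hb.kW_add, hd.kW_add, lie_add, this]
      abel
    · rintro _ ⟨b, d, hb, hd, rfl⟩ x y
      have : (fun z : g => x • WeilAux.kW ⁅z, y⁆ d) = x • (fun z : g => WeilAux.kW (⁅z, y⁆) d) := by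
        rfl
      simp only [map_add, kW_dL, hb.kW_smul, hd.kW_smul, map_smul, smul_add, smul_sub, lie_smul, this]
    · rintro _ ⟨b, d, hb, hd, rfl⟩ x y
      simp only [map_add, map_sub, kW_dL, kW_AW]
      rw [hb.kW_kW x y, hd.kW_kW x y]
      have e1 : ∀ z : g, WeilAux.kW x (WeilAux.kW ⁅z, y⁆ d) = WeilAux.kW ⁅z, y⁆ (WeilAux.kW x d) :=
        fun z => hd.kW_kW _ _
      have e2 : ∀ z : g, WeilAux.kW y (WeilAux.kW ⁅z, x⁆ d) = WeilAux.kW ⁅z, x⁆ (WeilAux.kW y d) :=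
        fun z => hd.kW_kW _ _
      simp only [e1, e2]
      abel
  exact key _ ⟨0, c, IsAlt.zero, hc, by simp⟩

end Pres
end WeilAux
namespace WeilAux

section Cartan

variable {F : Type*} [Field F] {g : Type*} [LieRing g] [LieAlgebra F g]

theorem IsAlt.neg {W : Wt F g} (hW : IsAlt W) : IsAlt (-W) := (Alt F g).neg_mem hW
theorem IsAlt.sub {W W' : Wt F g} (hW : IsAlt W) (hW' : IsAlt W') : IsAlt (W - W') :=
  (Alt F g).sub_mem hW hW'

theorem IsAlt.iW_sub {W : Wt F g} (hW : IsAlt W) (x y : g) :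
    WeilAux.iW (x - y) W = WeilAux.iW x W - WeilAux.iW y W := by
  have := hW.iW_add (x - y) y
  rw [sub_add_cancel] at this
  rw [this]; abel

theorem IsAlt.kW_sub {W : Wt F g} (hW : IsAlt W) (x y : g) :
    WeilAux.kW (x - y) W = WeilAux.kW x W - WeilAux.kW y W := by
  have := hW.kW_add (x - y) y
  rw [sub_add_cancel] at this
  rw [this]; abel

theorem LW_z (x : g) {c : Wt F g} {j : ℕ} (h : c 0 j = 0) : LW x c 0 j = 0 := by
  funext v w; simp [LW, h]

theorem IsAlt.LW_LW {c : Wt F g} (hc : IsAlt c) (x y : g) :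
    WeilAux.LW x (WeilAux.LW y c) - WeilAux.LW y (WeilAux.LW x c) = WeilAux.LW ⁅x, y⁆ c := by
  rw [← sub_eq_zero]
  refine coind (S := {a | ∃ c, IsAlt c ∧ a = WeilAux.LW x (WeilAux.LW y c)
    - WeilAux.LW y (WeilAux.LW x c) - WeilAux.LW ⁅x, y⁆ c}) ?_ ?_ ?_ _ ⟨c, hc, rfl⟩
  · rintro _ ⟨c, hc, rfl⟩
    simp only [Pi.sub_apply, LW_zz, sub_zero]
  · rintro _ ⟨c, hc, rfl⟩ z
    refine ⟨_, hc.iW z, ?_⟩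
    simp only [map_sub, iW_LW]
    rw [lie_lie, hc.iW_sub]
    abel
  · rintro _ ⟨c, hc, rfl⟩ z
    refine ⟨_, hc.kW z, ?_⟩
    simp only [map_sub, kW_LW]
    rw [lie_lie, hc.kW_sub]
    abel

theorem IsAlt.LW_dL {c : Wt F g} (hc : IsAlt c) (x : g) :
    WeilAux.LW x (WeilAux.dL c) = WeilAux.dL (WeilAux.LW x c) := by
  rw [← sub_eq_zero]
  refine coind' (S := {a | ∃ c, IsAlt c ∧ a = WeilAux.LW x (WeilAux.dL c)
    - WeilAux.dL (WeilAux.LW x c)}) ?_ ?_ _ ⟨c, hc, rfl⟩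
  · rintro _ ⟨c, hc, rfl⟩ j
    simp only [Pi.sub_apply, dL_zero, LW_z x (dL_zero c j), sub_zero]
  · rintro _ ⟨c, hc, rfl⟩ z
    refine ⟨_, (hc.iW z).neg, ?_⟩
    simp only [map_sub, map_neg, iW_LW, hc.iW_dL, (hc.LW x).iW_dL, ← hc.LW_LW]
    abel

theorem dK_z (c : Wt F g) (i) : dK c i 0 = 0 := rfl

theorem IsAlt.LW_dK {c : Wt F g} (hc : IsAlt c) (x : g) :
    WeilAux.LW x (WeilAux.dK c) = WeilAux.dK (WeilAux.LW x c) := by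
  rw [← sub_eq_zero]
  refine coind (S := {a | ∃ c, IsAlt c ∧ a = WeilAux.LW x (WeilAux.dK c)
    - WeilAux.dK (WeilAux.LW x c)}) ?_ ?_ ?_ _ ⟨c, hc, rfl⟩
  · rintro _ ⟨c, hc, rfl⟩
    simp only [Pi.sub_apply, dK_z, LW_zz, sub_zero]
  · rintro _ ⟨c, hc, rfl⟩ z
    refine ⟨_, (hc.iW z).neg, ?_⟩
    simp only [map_sub, map_neg, iW_LW, hc.iW_dK, (hc.LW x).iW_dK]
    abel
  · rintro _ ⟨c, hc, rfl⟩ z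
    refine ⟨_, (hc.kW z), ?_⟩
    simp only [map_sub, map_add, kW_LW, kW_dK, iW_LW]
    abel

theorem IsAlt.dL_dL {c : Wt F g} (hc : IsAlt c) : WeilAux.dL (WeilAux.dL c) = 0 := by
  refine coind' (S := {a | ∃ c, IsAlt c ∧ a = WeilAux.dL (WeilAux.dL c)}) ?_ ?_ _ ⟨c, hc, rfl⟩
  · rintro _ ⟨c, hc, rfl⟩ j
    rfl
  · rintro _ ⟨c, hc, rfl⟩ z
    refine ⟨_, hc.iW z, ?_⟩
    simp only [hc.dL.iW_dL, hc.iW_dL, map_sub, hc.LW_dL]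
    abel

theorem IsAlt.dK_dK {c : Wt F g} (hc : IsAlt c) : WeilAux.dK (WeilAux.dK c) = 0 := by
  refine coind (S := {a | ∃ c, IsAlt c ∧ a = WeilAux.dK (WeilAux.dK c)}) ?_ ?_ ?_ _ ⟨c, hc, rfl⟩
  · rintro _ ⟨c, hc, rfl⟩
    rfl
  · rintro _ ⟨c, hc, rfl⟩ z
    refine ⟨_, hc.iW z, ?_⟩
    simp only [hc.dK.iW_dK, hc.iW_dK, map_neg, neg_neg]
  · rintro _ ⟨c, hc, rfl⟩ z
    refine ⟨_, hc.kW z, ?_⟩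
    simp only [kW_dK, map_add, hc.iW_dK]
    abel

theorem mW_LW_zero (j : ℕ) : ∀ {c : Wt F g}, IsAlt c → mW (fun y => LW y c) 0 j = 0 := by
  induction j with
  | zero => intros; rfl
  | succ j ih =>
    intro c hc
    funext v w
    rw [← Fin.cons_self_tail w]
    generalize w 0 = x
    generalize Fin.tail w = w
    rw [← kW_apply x (mW fun y => LW y c), kW_mW]
    simp only [kW_LW]
    have e : (fun y => LW y (kW x c) - kW ⁅y, x⁆ c) = (fun y => LW y (kW x c))
      - (fun y => kW ⁅y, x⁆ c) := rfl
    rw [e, map_sub]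
    simp only [Pi.add_apply, Pi.sub_apply, ih (hc.kW x), Pi.zero_apply, zero_sub]
    cases j with
    | zero => simp [LW, mW_zero]
    | succ j =>
      have h3 : mW (fun y => kW ⁅y, x⁆ c) 0 (j+1) v w
        = ∑ r : Fin (j+1), c 0 (j+1) v (Fin.cons ⁅w r, x⁆ (w ∘ r.succAbove)) := rfl
      simp only [Pi.neg_apply]
      rw [h3]
      simp only [hc.wcons_succAbove, LW, LinearMap.coe_mk, AddHom.coe_mk]
      rw [← Finset.sum_neg_distrib]
      simp only [Finset.univ_eq_empty, Finset.sum_empty, zero_add]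
      rw [← Finset.sum_neg_distrib, ← Finset.sum_add_distrib]
      refine Finset.sum_eq_zero fun r _ => ?_
      rw [← lie_skew, ← neg_one_smul F ⁅w r, x⁆, hc.ws]
      ring

theorem mW_congr {f f' : g → Wt F g} {i : ℕ} (h : ∀ y j, f y i j = f' y i j) (j : ℕ) :
    mW f i j = mW f' i j := by
  cases j with
  | zero => rfl
  | succ j => funext v w; simp only [mW, LinearMap.coe_mk, AddHom.coe_mk, h]

theorem IsAlt.dL_dK {c : Wt F g} (hc : IsAlt c) :
    WeilAux.dL (WeilAux.dK c) + WeilAux.dK (WeilAux.dL c) = 0 := by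
  refine coind' (S := {a | ∃ c, IsAlt c ∧ a = WeilAux.dL (WeilAux.dK c)
    + WeilAux.dK (WeilAux.dL c)}) ?_ ?_ _ ⟨c, hc, rfl⟩
  · rintro _ ⟨c, hc, rfl⟩ j
    rw [Pi.add_apply, Pi.add_apply, dL_zero, zero_add, dK_apply]
    rw [← mW_LW_zero j hc]
    refine mW_congr (fun y j => ?_) j
    rw [hc.iW_dL, Pi.sub_apply, Pi.sub_apply, dL_zero, sub_zero]
  · rintro _ ⟨c, hc, rfl⟩ z
    refine ⟨_, hc.iW z, ?_⟩
    simp only [map_add, hc.dK.iW_dL, hc.iW_dL, hc.dL.iW_dK, hc.iW_dK, map_sub, map_neg, hc.LW_dK]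
    abel

/-- The Weil differential as a linear map. -/
def DW : Wt F g →ₗ[F] Wt F g := dL + dK

theorem DW_apply (c : Wt F g) : DW c = dL c + dK c := rfl

theorem IsAlt.DW {c : Wt F g} (hc : IsAlt c) : IsAlt (DW c) := hc.dL.add hc.dK

theorem IsAlt.iW_DW {c : Wt F g} (hc : IsAlt c) (x : g) :
    WeilAux.iW x (WeilAux.DW c) = WeilAux.LW x c - WeilAux.DW (WeilAux.iW x c) := by
  simp only [DW_apply, map_add, hc.iW_dL, hc.iW_dK]
  abel

theorem IsAlt.LW_DW {c : Wt F g} (hc : IsAlt c) (x : g) :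
    WeilAux.LW x (WeilAux.DW c) = WeilAux.DW (WeilAux.LW x c) := by
  simp only [DW_apply, map_add, hc.LW_dL, hc.LW_dK]

theorem IsAlt.DW_DW {c : Wt F g} (hc : IsAlt c) : WeilAux.DW (WeilAux.DW c) = 0 := by
  simp only [DW_apply, map_add, hc.dL_dL, hc.dK_dK, zero_add, add_zero]
  rw [add_comm]
  exact hc.dL_dK

theorem LW_AW (x : g) (f : g → Wt F g) :
    LW x (AW f) = AW (fun y => LW x (f y) - f ⁅x, y⁆) := by
  rw [← sub_eq_zero]
  refine coind' (S := {a | ∃ f : g → Wt F g, a = LW x (AW f) - AW (fun y => LW x (f y) - f ⁅x, y⁆)})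
    ?_ ?_ _ ⟨f, rfl⟩
  · rintro _ ⟨f, rfl⟩ j
    simp only [Pi.sub_apply, AW_zero, LW_z x (AW_zero f j), sub_zero]
  · rintro _ ⟨f, rfl⟩ z
    refine ⟨-fun y => iW z (f y), ?_⟩
    have e : (fun y => LW x ((-fun y => iW z (f y)) y) - (-fun y => iW z (f y)) ⁅x, y⁆)
      = - (fun y => LW x (iW z (f y)) - iW ⁅x, z⁆ (f y) - iW z (f ⁅x, y⁆)) - 
        (fun y => iW ⁅x, z⁆ (f y)) := by
      funext y; simp only [Pi.neg_apply, Pi.sub_apply, map_neg]; abel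
    simp only [e, map_sub, map_neg, iW_LW, iW_AW]
    abel

theorem LW_mW (x : g) (f : g → Wt F g) :
    LW x (mW f) = mW (fun y => LW x (f y) - f ⁅x, y⁆) := by
  rw [← sub_eq_zero]
  refine coind (S := {a | ∃ f : g → Wt F g, a = LW x (mW f) - mW (fun y => LW x (f y) - f ⁅x, y⁆)})
    ?_ ?_ ?_ _ ⟨f, rfl⟩
  · rintro _ ⟨f, rfl⟩
    simp only [Pi.sub_apply, mW_zero, LW_zz, sub_zero]
  · rintro _ ⟨f, rfl⟩ z
    refine ⟨fun y => iW z (f y), ?_⟩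
    have e : (fun y => LW x (iW z (f y)) - iW z (f ⁅x, y⁆))
      = (fun y => LW x (iW z (f y)) - iW ⁅x, z⁆ (f y) - iW z (f ⁅x, y⁆)) + 
        (fun y => iW ⁅x, z⁆ (f y)) := by
      funext y; simp only [Pi.add_apply]; abel
    simp only [e, map_sub, map_add, iW_LW, iW_mW]
    abel
  · rintro _ ⟨f, rfl⟩ z
    refine ⟨fun y => kW z (f y), ?_⟩
    have e : (fun y => LW x (kW z (f y)) - kW z (f ⁅x, y⁆))
      = (fun y => LW x (kW z (f y)) - kW ⁅x, z⁆ (f y) - kW z (f ⁅x, y⁆)) + 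
        (fun y => kW ⁅x, z⁆ (f y)) := by
      funext y; simp only [Pi.add_apply]; abel
    simp only [e, map_sub, map_add, kW_LW, kW_mW]
    abel

theorem mW_mW (f : g → g → Wt F g) :
    mW (fun y => mW (fun z => f y z)) = mW (fun z => mW (fun y => f y z)) := by
  rw [← sub_eq_zero]
  refine coind (S := {a | ∃ f : g → g → Wt F g, a = mW (fun y => mW (fun z => f y z))
    - mW (fun z => mW (fun y => f y z))}) ?_ ?_ ?_ _ ⟨f, rfl⟩
  · rintro _ ⟨f, rfl⟩
    simp only [Pi.sub_apply, mW_zero, sub_zero]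
  · rintro _ ⟨f, rfl⟩ x
    refine ⟨fun y z => iW x (f y z), ?_⟩
    simp only [map_sub, iW_mW]
  · rintro _ ⟨f, rfl⟩ x
    refine ⟨fun y z => kW x (f y z), ?_⟩
    have e : ∀ (a : g → Wt F g) (b : g → Wt F g), mW (fun y => a y + b y) = mW a + mW b :=
      fun a b => map_add mW a b
    simp only [map_sub, kW_mW, e]
    abel

theorem AW_add' (a b : g → Wt F g) : AW (fun y => a y + b y) = AW a + AW b := map_add AW a b
theorem AW_sub' (a b : g → Wt F g) : AW (fun y => a y - b y) = AW a - AW b := map_sub AW a b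
theorem AW_neg' (a : g → Wt F g) : AW (fun y => - a y) = - AW a := map_neg AW a
theorem AW_smul' (s : F) (a : g → Wt F g) : AW (fun y => s • a y) = s • AW a := map_smul AW s a
theorem mW_add' (a b : g → Wt F g) : mW (fun y => a y + b y) = mW a + mW b := map_add mW a b
theorem mW_sub' (a b : g → Wt F g) : mW (fun y => a y - b y) = mW a - mW b := map_sub mW a b
theorem mW_neg' (a : g → Wt F g) : mW (fun y => - a y) = - mW a := map_neg mW a
theorem mW_smul' (s : F) (a : g → Wt F g) : mW (fun y => s • a y) = s • mW a := map_smul mW s a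

theorem AW_AW (f : g → g → Wt F g) :
    AW (fun y => AW (fun z => f y z)) = - AW (fun z => AW (fun y => f y z)) := by
  rw [← sub_eq_zero, sub_neg_eq_add]
  refine coind' (S := {a | ∃ f : g → g → Wt F g, a = AW (fun y => AW (fun z => f y z))
    + AW (fun z => AW (fun y => f y z))}) ?_ ?_ _ ⟨f, rfl⟩
  · rintro _ ⟨f, rfl⟩ j
    simp only [Pi.add_apply, AW_zero, add_zero]
  · rintro _ ⟨f, rfl⟩ x
    refine ⟨fun y z => iW x (f y z), ?_⟩
    simp only [map_add, iW_AW, AW_sub']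
    abel

theorem mW_AW (f : g → g → Wt F g) :
    mW (fun y => AW (fun z => f y z)) = AW (fun z => mW (fun y => f y z)) := by
  rw [← sub_eq_zero]
  refine coind' (S := {a | ∃ f : g → g → Wt F g, a = mW (fun y => AW (fun z => f y z))
    - AW (fun z => mW (fun y => f y z))}) ?_ ?_ _ ⟨f, rfl⟩
  · rintro _ ⟨f, rfl⟩ j
    cases j with
    | zero => simp [mW_zero, AW_zero]
    | succ j =>
      funext v w
      simp [mW, AW]
  · rintro _ ⟨f, rfl⟩ x
    refine ⟨fun y z => -iW x (f y z), ?_⟩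
    simp only [map_sub, iW_AW, iW_mW, mW_sub', mW_neg', AW_neg']
    abel

theorem IsAlt.mW (f : g →ₗ[F] Wt F g) (hf : ∀ y, IsAlt (f y)) : IsAlt (mW (fun y => f y)) := by
  have key : ∀ c ∈ {c : Wt F g | ∃ (b : Wt F g) (f : g →ₗ[F] Wt F g), IsAlt b ∧ (∀ y, IsAlt (f y)) ∧
      c = b + WeilAux.mW (fun y => f y)}, IsAlt c := by
    apply alt_of_closed
    · rintro _ ⟨b, f, hb, hf, rfl⟩ x
      refine ⟨WeilAux.iW x b, ((WeilAux.iW x).comp f), (hb.iW x), ?_, ?_⟩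
      · intro y
        exact ((hf y).iW x)
      · rw [map_add, iW_mW]
        rfl
    · rintro _ ⟨b, f, hb, hf, rfl⟩ x
      refine ⟨WeilAux.kW x b + f x, ((WeilAux.kW x).comp f), (hb.kW x).add (hf x), ?_, ?_⟩
      · intro y
        exact ((hf y).kW x)
      · rw [map_add, kW_mW, add_assoc]
        rfl
    · rintro _ ⟨b, f, hb, hf, rfl⟩ x y
      simp only [map_add, iW_mW, hb.iW_add, (hf _).iW_add, mW_add']
      abel
    · rintro _ ⟨b, f, hb, hf, rfl⟩ x y
      simp only [map_add, iW_mW, hb.iW_smul, (hf _).iW_smul, mW_smul', smul_add]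
    · rintro _ ⟨b, f, hb, hf, rfl⟩ x
      simp only [map_add, iW_mW, hb.iW_iW, map_sub, (hf _).iW_iW]
      rw [show (fun _ => 0 : g → Wt F g) = 0 from rfl, map_zero]
      abel
    · rintro _ ⟨b, f, hb, hf, rfl⟩ x y
      simp only [map_add, kW_mW, hb.kW_add, (hf _).kW_add, mW_add']
      abel
    · rintro _ ⟨b, f, hb, hf, rfl⟩ x y
      simp only [map_add, kW_mW, hb.kW_smul, (hf _).kW_smul, mW_smul', map_smul, smul_add]
    · rintro _ ⟨b, f, hb, hf, rfl⟩ x y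
      simp only [map_add, kW_mW, hb.kW_kW x y, (hf _).kW_kW x y]
      abel
  exact key _ ⟨0, f, IsAlt.zero, hf, by simp⟩

end Cartan
end WeilAux
namespace WeilAux

section Theta

variable {F : Type*} [Field F] [CharZero F] {g : Type*} [LieRing g] [LieAlgebra F g]

theorem half_AA (f : g → g → Wt F g) :
    AW (fun y => AW (fun z => f y z))
      = (2⁻¹ : F) • AW (fun y => AW (fun z => f y z - f z y)) := by
  simp only [AW_sub']
  have h := AW_AW (fun y z => f z y)
  rw [h, sub_neg_eq_add, ← two_smul F, smul_smul, inv_mul_cancel₀ two_ne_zero, one_smul]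

/-- graded commutator of the differential and exterior multiplication -/
theorem DW_AW (f : g →ₗ[F] Wt F g) (hf : ∀ y, IsAlt (f y)) :
    DW (AW (fun y => f y)) + AW (fun y => DW (f y)) = mW (fun y => f y)
      - (2⁻¹ : F) • AW (fun y => AW (fun z => f ⁅y, z⁆)) := by
  rw [← sub_eq_zero]
  refine coind' (S := {a | ∃ f : g →ₗ[F] Wt F g, (∀ y, IsAlt (f y)) ∧
    a = DW (AW (fun y => f y)) + AW (fun y => DW (f y)) - (mW (fun y => f y)
      - (2⁻¹ : F) • AW (fun y => AW (fun z => f ⁅y, z⁆)))}) ?_ ?_ _ ⟨f, hf, rfl⟩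
  · rintro _ ⟨f, hf, rfl⟩ j
    simp only [Pi.sub_apply, Pi.add_apply, Pi.smul_apply, AW_zero, smul_zero, sub_zero, add_zero,
      DW_apply, dL_zero, zero_add, dK_apply, iW_AW]
    rw [sub_eq_zero]
    refine mW_congr (fun y j => ?_) j
    simp only [Pi.sub_apply, AW_zero, sub_zero]
  · rintro _ ⟨f, hf, rfl⟩ x
    refine ⟨(iW x).comp f, fun y => (hf y).iW x, ?_⟩
    have h1 : (2⁻¹ : F) • AW (fun z => f ⁅x, z⁆) + (2⁻¹ : F) • AW (fun z => f ⁅x, z⁆)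
      = AW (fun z => f ⁅x, z⁆) := by
      rw [← add_smul, ← two_mul, mul_inv_cancel₀ two_ne_zero, one_smul]
    have h2 : AW (fun z => f ⁅z, x⁆) = - AW (fun z => f ⁅x, z⁆) := by
      rw [← AW_neg']; congr 1; funext z; rw [← lie_skew, map_neg]
    simp only [map_sub, map_add, (IsAlt.AW f hf).iW_DW, iW_AW, iW_mW, map_smul, LW_AW, AW_sub',
      (hf _).iW_DW, LinearMap.comp_apply, h2, smul_sub, smul_neg]
    rw [← sub_eq_zero]
    refine Eq.trans ?_ (sub_eq_zero.2 h1)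
    abel

/-- The curvature as a bilinear map. -/
def curvL (pr : g →ₗ[F] g) : g →ₗ[F] g →ₗ[F] g :=
  LinearMap.mk₂ F (curvW F g pr)
    (fun x y z => by simp only [curvW, map_add, add_lie]; abel)
    (fun s x y => by simp only [curvW, map_smul, smul_lie, smul_sub])
    (fun x y z => by simp only [curvW, map_add, lie_add]; abel)
    (fun s x y => by simp only [curvW, map_smul, lie_smul, smul_sub])

theorem curvL_apply (pr : g →ₗ[F] g) (x y : g) : curvL pr x y = curvW F g pr x y := rfl

theorem curvL_skew (pr : g →ₗ[F] g) (x y : g) : curvL pr x y = - curvL pr y x := by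
  simp only [curvL_apply, curvW]
  rw [← lie_skew, ← lie_skew x y, map_neg]; abel

/-- multiplication by the curvature -/
def Th (pr : g →ₗ[F] g) (f : g → Wt F g) : Wt F g :=
  mW (fun y => f (pr y)) + (2⁻¹ : F) • AW (fun y => AW (fun z => f (curvL pr y z)))

theorem Th_add (pr : g →ₗ[F] g) (f f' : g → Wt F g) :
    Th pr (fun y => f y + f' y) = Th pr f + Th pr f' := by
  simp only [Th, mW_add', AW_add', smul_add]; abel
theorem Th_sub (pr : g →ₗ[F] g) (f f' : g → Wt F g) :
    Th pr (fun y => f y - f' y) = Th pr f - Th pr f' := by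
  simp only [Th, mW_sub', AW_sub', smul_sub]; abel
theorem Th_neg (pr : g →ₗ[F] g) (f : g → Wt F g) :
    Th pr (fun y => - f y) = - Th pr f := by
  simp only [Th, mW_neg', AW_neg', smul_neg]; abel
theorem Th_smul (pr : g →ₗ[F] g) (s : F) (f : g → Wt F g) :
    Th pr (fun y => s • f y) = s • Th pr f := by
  simp only [Th, mW_smul', AW_smul', smul_add, smul_smul, mul_comm]

theorem iW_Th (pr : g →ₗ[F] g) (f : g →ₗ[F] Wt F g) (x : g) :
    iW x (Th pr (fun y => f y)) = Th pr (fun y => iW x (f y)) + AW (fun y => f (curvL pr x y)) := by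
  have h1 : (2⁻¹ : F) • AW (fun z => f (curvL pr x z)) + (2⁻¹ : F) • AW (fun z => f (curvL pr x z))
      = AW (fun z => f (curvL pr x z)) := by
      rw [← add_smul, ← two_mul, mul_inv_cancel₀ two_ne_zero, one_smul]
  have h2 : AW (fun z => f (curvL pr z x)) = - AW (fun z => f (curvL pr x z)) := by
      rw [← AW_neg']; congr 1; funext z; rw [curvL_skew, map_neg]
  simp only [Th, map_add, iW_mW, map_smul, iW_AW, AW_sub', h2, smul_sub, smul_neg]
  conv_rhs => rw [← h1]
  abel

theorem LW_Th (pr : g →ₗ[F] g) (f : g →ₗ[F] Wt F g) (x : g) :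
    LW x (Th pr (fun y => f y)) = Th pr (fun y => LW x (f y)) - mW (fun y => f (pr ⁅x, y⁆))
      - (2⁻¹ : F) • AW (fun y => AW (fun z => f (curvL pr ⁅x, y⁆ z) + f (curvL pr y ⁅x, z⁆))) := by
  simp only [Th, map_add, LW_mW, map_smul, LW_AW, AW_sub', AW_add', mW_sub', smul_sub, smul_add]
  abel

theorem isAlt_Th (pr : g →ₗ[F] g) (f : g →ₗ[F] Wt F g) (hf : ∀ y, IsAlt (f y)) :
    IsAlt (Th pr (fun y => f y)) := by
  refine (IsAlt.mW (f.comp pr) (fun y => hf _)).add (IsAlt.smul _ ?_)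
  have key : ∃ φ : g →ₗ[F] Wt F g, ∀ y, φ y = AW (fun z => f (curvL pr y z)) := by
    refine ⟨⟨⟨fun y => AW (fun z => f (curvL pr y z)), fun x y => ?_⟩, fun s x => ?_⟩, fun y => rfl⟩
    · simp only [map_add, LinearMap.add_apply, AW_add']
    · simp only [map_smul, LinearMap.smul_apply, AW_smul', RingHom.id_apply]
  obtain ⟨φ, hφ⟩ := key
  simp only [← hφ]
  refine IsAlt.AW φ (fun y => ?_)
  rw [hφ]
  exact IsAlt.AW (f.comp (curvL pr y)) (fun z => hf _)

theorem bianchi (pr : g →ₗ[F] g) (x y z : g) :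
    - curvL pr ⁅x, y⁆ z - curvL pr y ⁅x, z⁆ + ⁅pr x, curvL pr y z⁆ + curvL pr x ⁅y, z⁆
      - (⁅pr y, curvL pr x z⁆ - ⁅pr z, curvL pr x y⁆) = 0 := by
  simp only [curvL_apply, curvW, lie_sub]
  rw [lie_lie x y z, map_sub, ← lie_skew (pr ⁅x, y⁆) (pr z), ← lie_skew (pr z) ⁅pr x, pr y⁆,
    lie_lie (pr x)]
  abel

theorem Th_Z (pr : g →ₗ[F] g) (f : g →ₗ[F] Wt F g) (hf : ∀ y, IsAlt (f y)) (x : g) :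
    LW x (Th pr (fun y => f y)) - Th pr (fun y => LW x (f y)) + Th pr (fun y => f ⁅pr x, y⁆)
      - (DW (AW (fun y => f (curvL pr x y))) + AW (fun y => DW (f (curvL pr x y))))
      - AW (fun y => AW (fun z => f ⁅pr y, curvL pr x z⁆)) = 0 := by
  have h := DW_AW (f.comp (curvL pr x)) (fun y => hf _)
  simp only [LinearMap.comp_apply] at h
  rw [h, LW_Th, half_AA (fun y z => f ⁅pr y, curvL pr x z⁆)]
  simp only [Th]
  have e1 : mW (fun y => f (curvL pr x y)) = mW (fun y => f ⁅pr x, pr y⁆) - mW (fun y => f (pr ⁅x, y⁆)) := by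
    rw [← mW_sub']; congr 1; funext y; rw [curvL_apply, curvW, map_sub]
  have e2 : (2⁻¹ : F) • AW (fun y => AW (fun z => - f (curvL pr ⁅x, y⁆ z) - f (curvL pr y ⁅x, z⁆)
      + f ⁅pr x, curvL pr y z⁆ + f (curvL pr x ⁅y, z⁆) -
      (f ⁅pr y, curvL pr x z⁆ - f ⁅pr z, curvL pr x y⁆))) = 0 := by
    have : ∀ y z : g, - f (curvL pr ⁅x, y⁆ z) - f (curvL pr y ⁅x, z⁆)
      + f ⁅pr x, curvL pr y z⁆ + f (curvL pr x ⁅y, z⁆) -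
      (f ⁅pr y, curvL pr x z⁆ - f ⁅pr z, curvL pr x y⁆) = 0 := by
      intro y z
      rw [← map_zero f, ← bianchi pr x y z]
      simp only [map_add, map_sub, map_neg]
    simp only [this]
    rw [show (fun _ => 0 : g → Wt F g) = 0 from rfl, map_zero]
    rw [show (fun _ => 0 : g → Wt F g) = 0 from rfl, map_zero, smul_zero]
  rw [e1, ← e2]
  simp only [AW_add', AW_sub', AW_neg', smul_add, smul_sub, smul_neg]
  abel

/-- the differential versus multiplication by the curvature -/
theorem DW_Th (pr : g →ₗ[F] g) (f : g →ₗ[F] Wt F g) (hf : ∀ y, IsAlt (f y)) :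
    DW (Th pr (fun y => f y)) = Th pr (fun y => DW (f y))
      - AW (fun y => Th pr (fun z => f ⁅pr y, z⁆)) := by
  rw [← sub_eq_zero]
  refine coind' (S := {a | ∃ f : g →ₗ[F] Wt F g, (∀ y, IsAlt (f y)) ∧
    a = DW (Th pr (fun y => f y)) - (Th pr (fun y => DW (f y))
      - AW (fun y => Th pr (fun z => f ⁅pr y, z⁆)))}) ?_ ?_ _ ⟨f, hf, rfl⟩
  · rintro _ ⟨f, hf, rfl⟩ j
    have e1 : DW (Th pr (fun y => f y)) 0 j = mW (fun y => mW (fun z => iW y (f (pr z)))) 0 j := by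
      rw [DW_apply, Pi.add_apply, Pi.add_apply, dL_zero, zero_add, dK_apply]
      refine mW_congr (fun y j => ?_) j
      rw [iW_Th, Th]
      simp only [Pi.add_apply, Pi.smul_apply, AW_zero, smul_zero, add_zero]
    have e2 : Th pr (fun y => DW (f y)) 0 j = mW (fun z => mW (fun y => iW y (f (pr z)))) 0 j := by
      rw [Th]
      simp only [Pi.add_apply, Pi.smul_apply, AW_zero, smul_zero, add_zero]
      refine mW_congr (fun y j => ?_) j
      rw [DW_apply, Pi.add_apply, Pi.add_apply, dL_zero, zero_add, dK_apply]
    simp only [Pi.sub_apply, AW_zero, e1, e2]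
    rw [mW_mW, sub_zero, sub_self]
  · rintro _ ⟨f, hf, rfl⟩ x
    refine ⟨-((iW x).comp f), fun y => ((hf y).iW x).neg, ?_⟩
    have hZ := Th_Z pr f hf x
    have e3 : ∀ y, iW x (Th pr (fun z => f ⁅pr y, z⁆)) = Th pr (fun z => iW x (f ⁅pr y, z⁆))
        + AW (fun z => f ⁅pr y, curvL pr x z⁆) := by
      intro y
      exact iW_Th pr (f.comp (LieAlgebra.ad F g (pr y) : g →ₗ[F] g)) x
    have e4 : iW x (Th pr (fun y => DW (f y))) = Th pr (fun y => iW x (DW (f y)))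
        + AW (fun y => DW (f (curvL pr x y))) := iW_Th pr (DW.comp f) x
    simp only [map_sub, (isAlt_Th pr f hf).iW_DW, iW_Th, iW_AW, e3, e4, (hf _).iW_DW, map_add,
      Th_sub, AW_sub', AW_add', LinearMap.neg_apply, LinearMap.comp_apply, map_neg, Th_neg, AW_neg']
    rw [← sub_eq_zero]
    refine Eq.trans ?_ hZ
    abel

theorem Th_AW (pr : g →ₗ[F] g) (f : g → g → Wt F g) :
    Th pr (fun x => AW (fun y => f x y)) = AW (fun y => Th pr (fun x => f x y)) := by
  simp only [Th, AW_add', AW_smul']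
  congr 1
  · rw [mW_AW]
  · congr 1
    have h1 : ∀ x, AW (fun z => AW (fun y => f (curvL pr x z) y))
        = - AW (fun y => AW (fun z => f (curvL pr x z) y)) := fun x => AW_AW _
    simp only [h1, AW_neg']
    rw [AW_AW (fun x y => AW (fun z => f (curvL pr x z) y)), neg_neg]

theorem Th_congr (pr : g →ₗ[F] g) (h : LieSubalgebra F g) (hpr : IsEqProj F g h pr)
    {f f' : g → Wt F g} (hff : ∀ x ∈ h, f x = f' x) : Th pr f = Th pr f' := by
  have hc : ∀ x y, curvL pr x y ∈ h := fun x y =>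
    h.sub_mem (h.lie_mem (hpr.1 x) (hpr.1 y)) (hpr.1 _)
  simp only [Th]
  congr 2
  · funext y; exact hff _ (hpr.1 y)
  · congr 1; funext y; congr 1; funext z; exact hff _ (hc y z)

end Theta
end WeilAux
namespace WeilAux

section Chi

variable {F : Type*} [Field F] [CharZero F] {g : Type*} [LieRing g] [LieAlgebra F g]

/-- symmetric multilinear forms -/
structure SymM (j : ℕ) (Q : (Fin j → g) → F) : Prop where
  add : ∀ (w : Fin j → g) (r : Fin j) (x y : g),
      Q (Function.update w r (x + y))
        = Q (Function.update w r x) + Q (Function.update w r y)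
  smul : ∀ (w : Fin j → g) (r : Fin j) (s : F) (x : g),
      Q (Function.update w r (s • x)) = s * Q (Function.update w r x)
  sym : ∀ (w : Fin j → g) (ρ : Equiv.Perm (Fin j)), Q (w ∘ ρ) = Q w

/-- partial evaluation -/
def pd {j : ℕ} (x : g) : ((Fin (j+1) → g) → F) →ₗ[F] ((Fin j → g) → F) where
  toFun P := fun p => P (Fin.cons x p)
  map_add' _ _ := rfl
  map_smul' _ _ := rfl

theorem pd_apply {j : ℕ} (x : g) (P : (Fin (j+1) → g) → F) (p) : pd x P p = P (Fin.cons x p) := rfl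

/-- the infinitesimal action -/
def lam {j : ℕ} (b : g) : ((Fin j → g) → F) →ₗ[F] ((Fin j → g) → F) where
  toFun P := fun p => - ∑ r : Fin j, P (Function.update p r ⁅b, p r⁆)
  map_add' _ _ := by
    funext p; simp [Finset.sum_add_distrib]; ring
  map_smul' _ _ := by
    funext p; simp [Finset.mul_sum]

/-- symmetric forms as elements of the ambient space -/
def emb (j : ℕ) (P : (Fin j → g) → F) : Wt F g := fun i j' _ w =>
  if h : i = 0 ∧ j' = j then P (fun r => w (Fin.cast h.2.symm r)) else 0

theorem emb_same {j : ℕ} (P : (Fin j → g) → F) (v w) : emb j P 0 j v w = P w := by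
  simp [emb]

theorem isAlt_emb {j : ℕ} {P : (Fin j → g) → F} (hP : SymM j P) : IsAlt (emb j P) where
  va i j' v t x y w := by
    by_cases h : i = 0 ∧ j' = j
    · obtain ⟨rfl, rfl⟩ := h; exact t.elim0
    · simp [emb, h]
  vs i j' v t x y w := by
    by_cases h : i = 0 ∧ j' = j
    · obtain ⟨rfl, rfl⟩ := h; exact t.elim0
    · simp [emb, h]
  alt i j' v t x y w := by
    by_cases h : i = 0 ∧ j' = j
    · obtain ⟨rfl, rfl⟩ := h; exact t.elim0
    · simp [emb, h]
  wa i j' v t x y w := by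
    by_cases h : i = 0 ∧ j' = j
    · obtain ⟨rfl, rfl⟩ := h
      simp only [emb_same]; exact hP.add _ _ _ _
    · simp [emb, h]
  ws i j' v t x y w := by
    by_cases h : i = 0 ∧ j' = j
    · obtain ⟨rfl, rfl⟩ := h
      simp only [emb_same]; exact hP.smul _ _ _ _
    · simp [emb, h]
  sym i j' v t x := by
    by_cases h : i = 0 ∧ j' = j
    · obtain ⟨rfl, rfl⟩ := h
      simp only [emb_same]; exact hP.sym _ _
    · simp [emb, h]

theorem IsAlt.symM {c : Wt F g} (hc : IsAlt c) (i j v) : SymM j (c i j v) :=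
  ⟨hc.wa i j v, hc.ws i j v, hc.sym i j v⟩

theorem SymM.lam {j : ℕ} {P : (Fin j → g) → F} (hP : SymM j P) (b : g) : SymM j (lam b P) := by
  have h := ((isAlt_emb hP).LW b).symM 0 j Fin.elim0
  have e : LW b (emb j P) 0 j Fin.elim0 = WeilAux.lam b P := by
    funext w
    simp [LW, emb_same, WeilAux.lam]
  rwa [e] at h

theorem SymM.pd {j : ℕ} {P : (Fin (j+1) → g) → F} (hP : SymM (j+1) P) (x : g) :
    SymM j (pd x P) := by
  have h := ((isAlt_emb hP).kW x).symM 0 j Fin.elim0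
  have e : kW x (emb (j+1) P) 0 j Fin.elim0 = WeilAux.pd x P := by
    funext w
    simp [kW_apply, emb_same, WeilAux.pd]
  rwa [e] at h

theorem SymM.pd_add {j : ℕ} {P : (Fin (j+1) → g) → F} (hP : SymM (j+1) P) (x y : g) :
    WeilAux.pd (x + y) P = WeilAux.pd x P + WeilAux.pd y P := by
  funext w
  have := hP.add (Fin.cons 0 w) 0 x y
  simpa [pd_apply] using this

theorem SymM.pd_smul {j : ℕ} {P : (Fin (j+1) → g) → F} (hP : SymM (j+1) P) (s : F) (y : g) :
    WeilAux.pd (s • y) P = s • WeilAux.pd y P := by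
  funext w
  have := hP.smul (Fin.cons 0 w) 0 s y
  simpa [pd_apply] using this

theorem pd_lam {j : ℕ} (P : (Fin (j+1) → g) → F) (x b : g) :
    pd x (lam b P) = lam b (pd x P) - pd ⁅b, x⁆ P := by
  funext w
  simp only [pd_apply, lam, LinearMap.coe_mk, AddHom.coe_mk, Pi.sub_apply]
  rw [Fin.sum_univ_succ]
  simp only [Fin.cons_zero, Fin.update_cons_zero, Fin.cons_succ, Fin.cons_update]
  ring

/-- the characteristic map, recursively -/
def X (pr : g →ₗ[F] g) : ∀ j : ℕ, ((Fin j → g) → F) →ₗ[F] Wt F g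
  | 0 => { toFun := fun P => emb 0 P
           map_add' := fun P Q => by
            funext i j v w; simp only [emb, Pi.add_apply]; split_ifs <;> simp
           map_smul' := fun s Q => by
            funext i j v w; simp only [emb, Pi.smul_apply, smul_eq_mul]; split_ifs <;> simp }
  | (j+1) => { toFun := fun P => ((j+1 : ℕ) : F)⁻¹ • Th pr (fun x => X pr j (pd x P))
               map_add' := fun P Q => by simp only [map_add, Th_add, smul_add]
               map_smul' := fun s Q => by
                simp only [map_smul, Th_smul, RingHom.id_apply, smul_smul, mul_comm] }

theorem X_zero (pr : g →ₗ[F] g) (P : (Fin 0 → g) → F) : X pr 0 P = emb 0 P := rfl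
theorem X_succ (pr : g →ₗ[F] g) {j : ℕ} (P : (Fin (j+1) → g) → F) :
    X pr (j+1) P = ((j+1 : ℕ) : F)⁻¹ • Th pr (fun x => X pr j (pd x P)) := rfl

theorem X_lin (pr : g →ₗ[F] g) {j : ℕ} {P : (Fin (j+1) → g) → F} (hP : SymM (j+1) P) :
    ∃ f : g →ₗ[F] Wt F g, ∀ x, f x = X pr j (pd x P) :=
  ⟨⟨⟨fun x => X pr j (pd x P), fun x y => by rw [hP.pd_add, map_add]⟩,
    fun s x => by simp only [hP.pd_smul, map_smul, RingHom.id_apply]⟩, fun x => rfl⟩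

theorem X_alt (pr : g →ₗ[F] g) (j : ℕ) : ∀ {P : (Fin j → g) → F}, SymM j P → IsAlt (X pr j P) := by
  induction j with
  | zero => intro P hP; exact isAlt_emb hP
  | succ j ih =>
    intro P hP
    obtain ⟨f, hf⟩ := X_lin pr hP
    rw [X_succ]
    simp only [← hf]
    refine (isAlt_Th pr f fun y => ?_).smul _
    rw [hf]; exact ih (hP.pd y)

theorem X_vanish {pr : g →ₗ[F] g} {h : LieSubalgebra F g} (hpr : IsEqProj F g h pr) (j : ℕ) :
    ∀ {P : (Fin j → g) → F}, (∀ w, (∀ r, w r ∈ h) → P w = 0) → X pr j P = 0 := by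
  induction j with
  | zero =>
    intro P hP
    funext i j v w
    rw [X_zero, emb]
    split_ifs with hh
    · exact hP _ (fun r => r.elim0)
    · rfl
  | succ j ih =>
    intro P hP
    rw [X_succ, Th_congr pr h hpr (f' := fun _ => (0 : F) • (0 : Wt F g)), Th_smul, zero_smul, smul_zero]
    intro x hx
    rw [zero_smul]
    refine ih fun w hw => hP _ fun r => ?_
    refine Fin.cases ?_ (fun r => ?_) r
    · exact hx
    · exact hw r

theorem DW_emb0 (P : (Fin 0 → g) → F) : DW (emb 0 P) = 0 := by
  have hP : SymM 0 P := ⟨fun _ r => r.elim0, fun _ r => r.elim0, fun w ρ => by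
    congr 1; funext r; exact r.elim0⟩
  have hA := isAlt_emb hP
  have hi : ∀ x, iW x (emb 0 P) = 0 := by
    intro x; funext i j v w; simp [iW_apply, emb]
  have hL : ∀ x, LW x (emb 0 P) = 0 := by
    intro x; funext i j v w
    simp only [LW, LinearMap.coe_mk, AddHom.coe_mk, emb]
    by_cases h : i = 0 ∧ j = 0
    · obtain ⟨rfl, rfl⟩ := h; simp
    · simp [h]
  refine coind' (S := {a | a = 0 ∨ a = DW (emb 0 P)}) ?_ ?_ _ (Or.inr rfl)
  · rintro _ (rfl | rfl) j
    · rfl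
    · rw [DW_apply, Pi.add_apply, Pi.add_apply, dL_zero, zero_add, dK_apply]
      simp only [hi]
      rw [show (fun _ => 0 : g → Wt F g) = 0 from rfl, map_zero]
      rfl
  · rintro _ (rfl | rfl) x
    · left; simp
    · left; rw [hA.iW_DW, hi, hL]; simp

theorem X_D (pr : g →ₗ[F] g) (j : ℕ) : ∀ {P : (Fin j → g) → F}, SymM j P →
    DW (X pr j P) = AW (fun y => X pr j (lam (pr y) P)) := by
  induction j with
  | zero =>
    intro P hP
    rw [X_zero, DW_emb0]
    have : ∀ b : g, lam b P = 0 := by intro b; funext w; simp [lam]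
    simp only [this, map_zero]
    rw [show (fun _ => 0 : g → Wt F g) = 0 from rfl, map_zero]
  | succ j ih =>
    intro P hP
    obtain ⟨f, hf⟩ := X_lin pr hP
    have hfa : ∀ y, IsAlt (f y) := fun y => by rw [hf]; exact X_alt pr j (hP.pd y)
    have h := DW_Th pr f hfa
    simp only [hf, ih (hP.pd _)] at h
    simp only [X_succ, map_smul, h, AW_smul', pd_lam, map_sub, Th_sub, AW_sub']
    rw [Th_AW]

theorem curvL_left {pr : g →ₗ[F] g} {h : LieSubalgebra F g} (hpr : IsEqProj F g h pr) {x : g}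
    (hx : x ∈ h) (y : g) : curvL pr x y = 0 := by
  rw [curvL_apply, curvW, hpr.2.1 x hx, hpr.2.2 x hx, sub_self]

theorem X_i {pr : g →ₗ[F] g} {h : LieSubalgebra F g} (hpr : IsEqProj F g h pr) (j : ℕ) :
    ∀ {P : (Fin j → g) → F}, SymM j P → ∀ x ∈ h, iW x (X pr j P) = 0 := by
  induction j with
  | zero => intro P hP x hx; funext i j v w; simp [iW_apply, X_zero, emb]
  | succ j ih =>
    intro P hP x hx
    obtain ⟨f, hf⟩ := X_lin pr hP
    have h1 := iW_Th pr f x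
    have h0 : (fun _ => 0 : g → Wt F g) = fun _ => (0 : F) • (0 : Wt F g) := by simp
    simp only [curvL_left hpr hx, map_zero] at h1
    simp only [hf, ih (hP.pd _) x hx] at h1
    rw [h0, Th_smul, AW_smul', zero_smul, zero_smul, add_zero] at h1
    rw [X_succ, map_smul, h1, smul_zero]

theorem _root_.IsSymPoly.symM {h : LieSubalgebra F g} {j : ℕ} {P : (Fin j → g) → F}
    (hP : IsSymPoly F g h j P) : SymM j P := ⟨hP.1, hP.2.1, hP.2.2.1⟩

theorem X_closed {pr : g →ₗ[F] g} {h : LieSubalgebra F g} (hpr : IsEqProj F g h pr) {j : ℕ}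
    {P : (Fin j → g) → F} (hP : IsSymPoly F g h j P) : DW (X pr j P) = 0 := by
  rw [X_D pr j hP.symM]
  have : ∀ y, X pr j (lam (pr y) P) = 0 := by
    intro y
    refine X_vanish hpr j fun w hw => ?_
    simp only [lam, LinearMap.coe_mk, AddHom.coe_mk]
    rw [hP.2.2.2 _ (hpr.1 y) w hw, neg_zero]
  simp only [this]
  rw [show (fun _ => 0 : g → Wt F g) = 0 from rfl, map_zero]

theorem X_L {pr : g →ₗ[F] g} {h : LieSubalgebra F g} (hpr : IsEqProj F g h pr) {j : ℕ}
    {P : (Fin j → g) → F} (hP : IsSymPoly F g h j P) (x : g) (hx : x ∈ h) :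
    LW x (X pr j P) = 0 := by
  have h1 := (X_alt pr j hP.symM).iW_DW x
  rw [X_closed hpr hP, X_i hpr j hP.symM x hx, map_zero, map_zero, sub_zero] at h1
  exact h1.symm

end Chi
end WeilAux
namespace WeilAux

section Comb

variable {F : Type*} [Field F] [CharZero F] {g : Type*}

/-- full alternating sum -/
def FS {n : ℕ} (G : (Fin n → g) → F) (v : Fin n → g) : F :=
  ∑ σ : Equiv.Perm (Fin n), ((Equiv.Perm.sign σ : ℤ) : F) * G (v ∘ σ)

theorem FS_succ {n : ℕ} (G : (Fin (n+1) → g) → F) (v : Fin (n+1) → g) :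
    FS G v = ∑ t : Fin (n+1), (-1 : F)^t.1 * FS (fun u => G (Fin.cons (v t) u)) (v ∘ t.succAbove) := by
  let Φ : Fin (n+1) × Equiv.Perm (Fin n) → Equiv.Perm (Fin (n+1)) :=
    fun p => p.1.cycleRange.symm * Equiv.Perm.decomposeFin.symm (0, p.2)
  have hinj : Function.Injective Φ := by
    rintro ⟨t, τ⟩ ⟨t', τ'⟩ h
    have h0 : t = t' := by
      have := congrArg (fun σ : Equiv.Perm (Fin (n+1)) => σ 0) h
      simpa [Φ, Fin.cycleRange_symm_zero] using this
    subst h0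
    have h1 := mul_left_cancel h
    have h2 := Equiv.Perm.decomposeFin.symm.injective h1
    simp only [Prod.mk.injEq, true_and] at h2
    rw [h2]
  have hbij : Function.Bijective Φ := by
    rw [Fintype.bijective_iff_injective_and_card]
    refine ⟨hinj, ?_⟩
    simp [Fintype.card_perm, Nat.factorial_succ]
  have hs : ∀ p, Equiv.Perm.sign (Φ p) = (-1)^p.1.1 * Equiv.Perm.sign p.2 := by
    rintro ⟨t, τ⟩
    simp [Φ]
  have hv : ∀ p, v ∘ Φ p = Fin.cons (v p.1) ((v ∘ p.1.succAbove) ∘ p.2) := by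
    rintro ⟨t, τ⟩
    funext m
    refine Fin.cases ?_ (fun m => ?_) m
    · simp [Φ, Fin.cycleRange_symm_zero]
    · simp [Φ, Fin.cycleRange_symm_succ]
  rw [FS, ← hbij.sum_comp, Fintype.sum_prod_type]
  refine Finset.sum_congr rfl fun t _ => ?_
  rw [FS, Finset.mul_sum]
  refine Finset.sum_congr rfl fun τ _ => ?_
  rw [hs, hv]
  push_cast
  simp only [Function.comp_def]
  ring

theorem half_sum {i k : ℕ} (a b : Fin k → Fin i) (hab : ∀ s t, a s ≠ b t)
    (ha : Function.Injective a) (hb : Function.Injective b)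
    (h : Equiv.Perm (Fin i) → F) (hh : ∀ σ t, h (σ * Equiv.swap (a t) (b t)) = h σ) (m : ℕ)
    (hm : m ≤ k) :
    (2 : F)^m * ∑ σ, (if ∀ t : Fin k, t.1 < m → σ (a t) < σ (b t) then h σ else 0) = ∑ σ, h σ := by
  classical
  induction m with
  | zero => simp
  | succ m ih =>
    rw [← ih (by omega), pow_succ, mul_assoc]
    congr 1
    let M : Fin k := ⟨m, hm⟩
    have hQ : ∀ σ : Equiv.Perm (Fin i), (∀ t : Fin k, t.1 < m + 1 → σ (a t) < σ (b t)) ↔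
        ((∀ t : Fin k, t.1 < m → σ (a t) < σ (b t)) ∧ σ (a M) < σ (b M)) := by
      intro σ
      constructor
      · intro H
        exact ⟨fun t ht => H t (by omega), H M (by simp [M])⟩
      · rintro ⟨H1, H2⟩ t ht
        by_cases htm : t.1 = m
        · have : t = M := Fin.ext htm
          rw [this]; exact H2
        · exact H1 t (by omega)
    have hsw : ∀ σ : Equiv.Perm (Fin i), (∀ t : Fin k, t.1 < m →
        (σ * Equiv.swap (a M) (b M)) (a t) < (σ * Equiv.swap (a M) (b M)) (b t)) ↔
        (∀ t : Fin k, t.1 < m → σ (a t) < σ (b t)) := by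
      intro σ
      refine forall_congr' fun t => ?_
      refine imp_congr_right fun ht => ?_
      have hne : t ≠ M := by
        intro h; rw [h] at ht; simp [M] at ht
      simp only [Equiv.Perm.mul_apply]
      rw [Equiv.swap_apply_of_ne_of_ne (ha.ne hne) (hab _ _),
        Equiv.swap_apply_of_ne_of_ne (hab _ _).symm (hb.ne hne)]
    have e1 : ∑ σ, (if ∀ t : Fin k, t.1 < m → σ (a t) < σ (b t) then h σ else 0)
      = ∑ σ, (if (∀ t : Fin k, t.1 < m → σ (a t) < σ (b t)) ∧ σ (a M) < σ (b M) then h σ else 0)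
      + ∑ σ, (if (∀ t : Fin k, t.1 < m → σ (a t) < σ (b t)) ∧ σ (b M) < σ (a M) then h σ else 0) := by
      rw [← Finset.sum_add_distrib]
      refine Finset.sum_congr rfl fun σ _ => ?_
      by_cases hq : ∀ t : Fin k, t.1 < m → σ (a t) < σ (b t)
      · have hne : σ (a M) ≠ σ (b M) := σ.injective.ne (hab _ _)
        rcases lt_or_gt_of_ne hne with hlt | hlt
        · rw [if_pos hq, if_pos ⟨hq, hlt⟩, if_neg (fun H => absurd H.2 (not_lt.2 hlt.le)), add_zero]
        · rw [if_pos hq, if_neg (fun H => absurd H.2 (not_lt.2 hlt.le)), if_pos ⟨hq, hlt⟩, zero_add]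
      · rw [if_neg hq, if_neg (fun H => hq H.1), if_neg (fun H => hq H.1), add_zero]
    have e2 : ∑ σ, (if (∀ t : Fin k, t.1 < m → σ (a t) < σ (b t)) ∧ σ (b M) < σ (a M) then h σ else 0)
      = ∑ σ, (if (∀ t : Fin k, t.1 < m → σ (a t) < σ (b t)) ∧ σ (a M) < σ (b M) then h σ else 0) := by
      rw [← Equiv.sum_comp (Equiv.mulRight (Equiv.swap (a M) (b M)))]
      refine Finset.sum_congr rfl fun σ _ => ?_
      simp only [Equiv.coe_mulRight, hh, hsw]
      simp only [Equiv.Perm.mul_apply, Equiv.swap_apply_left, Equiv.swap_apply_right]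
    simp only [hQ]
    rw [e1, e2, two_mul]

end Comb

section Explicit

variable {F : Type*} [Field F] [CharZero F] {g : Type*} [LieRing g] [LieAlgebra F g]

/-- extension by zero of a tuple -/
def ext {n : ℕ} (u : Fin n → g) : ℕ → g := fun m => if h : m < n then u ⟨m, h⟩ else 0

theorem ext_cons_zero {n : ℕ} (x : g) (u : Fin n → g) : ext (Fin.cons x u : Fin (n+1) → g) 0 = x := by
  simp [ext]

theorem ext_cons_succ {n : ℕ} (x : g) (u : Fin n → g) (m : ℕ) :
    ext (Fin.cons x u : Fin (n+1) → g) (m+1) = ext u m := by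
  by_cases h : m < n
  · have h' : m + 1 < n + 1 := by omega
    simp only [ext, h, h', dif_pos]
    exact Fin.cons_succ (α := fun _ => g) x u ⟨m, h⟩
  · have h' : ¬ m + 1 < n + 1 := by omega
    simp only [ext, h, h', dif_neg, not_false_iff]

/-- the argument tuple -/
def T (pr : g →ₗ[F] g) {i j : ℕ} (u : Fin i → g) (w : Fin j → g) : ℕ → g := fun t =>
  if t < i/2 then curvL pr (ext u (2*t)) (ext u (2*t+1)) else pr (ext w (t - i/2))

theorem T_cons_zero (pr : g →ₗ[F] g) {i j : ℕ} (x y : g) (u : Fin i → g) (w : Fin j → g) :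
    T pr (Fin.cons x (Fin.cons y u) : Fin (i+2) → g) w 0 = curvL pr x y := by
  have : 0 < (i+2)/2 := by omega
  simp only [T, this, if_true, mul_zero, zero_add, ext_cons_zero]
  rw [show ext (Fin.cons x (Fin.cons y u) : Fin (i+2) → g) 1 = y from
    (ext_cons_succ x _ 0).trans (ext_cons_zero y u)]

theorem T_cons_succ (pr : g →ₗ[F] g) {i j : ℕ} (x y : g) (u : Fin i → g) (w : Fin j → g) (t : ℕ) :
    T pr (Fin.cons x (Fin.cons y u) : Fin (i+2) → g) w (t+1) = T pr u w t := by
  simp only [T]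
  by_cases h : t < i/2
  · have : t + 1 < (i+2)/2 := by omega
    rw [if_pos h, if_pos this, show 2*(t+1) = 2*t+1+1 by ring, ext_cons_succ, ext_cons_succ,
      ext_cons_succ, ext_cons_succ]
  · have : ¬ t + 1 < (i+2)/2 := by omega
    rw [if_neg h, if_neg this]
    congr 2; omega

theorem T_P_cons (pr : g →ₗ[F] g) {i j' j : ℕ} (x y : g) (u : Fin i → g) (w : Fin j' → g)
    (P : (Fin (j+1) → g) → F) :
    P (fun t => T pr (Fin.cons x (Fin.cons y u) : Fin (i+2) → g) w t.1)
      = pd (curvL pr x y) P (fun t => T pr u w t.1) := by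
  rw [pd_apply]
  congr 1
  funext t
  refine Fin.cases ?_ (fun t => ?_) t
  · exact T_cons_zero pr x y u w
  · exact T_cons_succ pr x y u w t

theorem SymM.cons_succAbove {j : ℕ} {P : (Fin (j+1) → g) → F} (hP : SymM (j+1) P)
    (p : Fin (j+1) → g) (s : Fin (j+1)) : P (Fin.cons (p s) (p ∘ s.succAbove)) = P p := by
  have e : (Fin.cons (p s) (p ∘ s.succAbove) : Fin (j+1) → g) = p ∘ s.cycleRange.symm := by
    funext m
    refine Fin.cases ?_ (fun m => ?_) m
    · simp [Function.comp, Fin.cycleRange_symm_zero]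
    · simp [Function.comp, Fin.cycleRange_symm_succ]
  rw [e]; exact hP.sym _ _

theorem T_P_w (pr : g →ₗ[F] g) {i j' j : ℕ} (hj : i/2 + j' = j) (u : Fin i → g)
    (w : Fin (j'+1) → g) (r : Fin (j'+1))
    {P : (Fin (j+1) → g) → F} (hP : SymM (j+1) P) :
    pd (pr (w r)) P (fun t => T pr u (w ∘ r.succAbove) t.1) = P (fun t => T pr u w t.1) := by
  have hs : i/2 + r.1 < j + 1 := by have := r.2; omega
  rw [← hP.cons_succAbove (fun t => T pr u w t.1) ⟨i/2 + r.1, hs⟩, pd_apply]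
  congr 2
  · have h1 : ¬ i/2 + r.1 < i/2 := by omega
    have h2 : i/2 + r.1 - i/2 = r.1 := by omega
    simp only [T, h1, if_false, h2, ext, r.2, dif_pos]
  · funext t
    simp only [T, Function.comp]
    by_cases h : t.1 < i/2
    · have h3 : ((⟨i/2 + r.1, hs⟩ : Fin (j+1)).succAbove t).1 = t.1 := by
        rw [Fin.succAbove_of_castSucc_lt]
        · rfl
        · rw [Fin.lt_def]; simp; omega
      rw [h3, if_pos h, if_pos h]
    · rw [if_neg h]
      by_cases h4 : t.1 < i/2 + r.1
      · have h3 : ((⟨i/2 + r.1, hs⟩ : Fin (j+1)).succAbove t).1 = t.1 := by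
          rw [Fin.succAbove_of_castSucc_lt]
          · rfl
          · rw [Fin.lt_def]; simp; omega
        rw [h3, if_neg h]
        have h5 : t.1 - i/2 < j' := by have := r.2; omega
        have h6 : t.1 - i/2 < j' + 1 := by omega
        simp only [ext, h5, h6, dif_pos, Function.comp]
        rw [Fin.succAbove_of_castSucc_lt]
        · rfl
        · rw [Fin.lt_def]; simp; omega
      · have h3 : ((⟨i/2 + r.1, hs⟩ : Fin (j+1)).succAbove t).1 = t.1 + 1 := by
          rw [Fin.succAbove_of_le_castSucc]
          · rfl
          · rw [Fin.le_def]; simp; omega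
        rw [h3, if_neg (by omega)]
        have := t.2
        have h5 : t.1 - i/2 < j' := by have := r.2; omega
        have h6 : t.1 + 1 - i/2 < j' + 1 := by omega
        simp only [ext, h5, h6, dif_pos, Function.comp]
        rw [Fin.succAbove_of_le_castSucc]
        · congr 2; ext; simp; omega
        · rw [Fin.le_def]; simp; omega

/-- fully symmetrized explicit formula -/
def Y (pr : g →ₗ[F] g) (j : ℕ) (P : (Fin j → g) → F) : Wt F g := fun i j' v w =>
  if i % 2 = 0 ∧ i/2 + j' = j then
    (((i/2).factorial : F))⁻¹ * ((2 : F)^(i/2))⁻¹ * FS (fun u => P (fun t => T pr u w t.1)) v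
  else 0

theorem mW_Y (pr : g →ₗ[F] g) {j : ℕ} {P : (Fin (j+1) → g) → F} (hP : SymM (j+1) P) (i j' v w) :
    mW (fun y => Y pr j (pd (pr y) P)) i j' v w = (j' : F) * Y pr (j+1) P i j' v w := by
  cases j' with
  | zero => simp [mW_zero]
  | succ j' =>
    have e : mW (fun y => Y pr j (pd (pr y) P)) i (j'+1) v w
      = ∑ r : Fin (j'+1), Y pr j (pd (pr (w r)) P) i j' v (w ∘ r.succAbove) := rfl
    rw [e]
    by_cases hc : i % 2 = 0 ∧ i/2 + j' = j
    · have hc' : i % 2 = 0 ∧ i/2 + (j'+1) = j + 1 := by omega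
      simp only [Y, if_pos hc, if_pos hc', T_P_w pr hc.2 _ w _ hP]
      simp
    · have hc' : ¬ (i % 2 = 0 ∧ i/2 + (j'+1) = j + 1) := by omega
      simp only [Y, if_neg hc, if_neg hc']
      simp

theorem AA_Y (pr : g →ₗ[F] g) {j : ℕ} (P : (Fin (j+1) → g) → F) (i j' v w) :
    (2⁻¹ : F) * AW (fun y => AW (fun z => Y pr j (pd (curvL pr y z) P))) i j' v w
      = ((i/2 : ℕ) : F) * Y pr (j+1) P i j' v w := by
  match i with
  | 0 => simp [AW_zero]
  | 1 => simp [AW, Y]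
  | (i+2) =>
    have e : AW (fun y => AW (fun z => Y pr j (pd (curvL pr y z) P))) (i+2) j' v w
      = ∑ t : Fin (i+2), (-1 : F)^t.1 * ∑ s : Fin (i+1), (-1 : F)^s.1 *
        Y pr j (pd (curvL pr (v t) ((v ∘ t.succAbove) s)) P) i j' ((v ∘ t.succAbove) ∘ s.succAbove) w := rfl
    rw [e]
    by_cases hc : i % 2 = 0 ∧ i/2 + j' = j
    · have hc' : (i+2) % 2 = 0 ∧ (i+2)/2 + j' = j + 1 := by omega
      have h2 : (i+2)/2 = i/2 + 1 := by omega
      simp only [Y, if_pos hc, if_pos hc']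
      rw [FS_succ]
      simp only [FS_succ (n := i), T_P_cons]
      rw [h2, Nat.factorial_succ]
      have h3 : (((i/2 + 1 : ℕ)) : F) ≠ 0 := Nat.cast_ne_zero.2 (by omega)
      have h4 : (((i/2).factorial : ℕ) : F) ≠ 0 := Nat.cast_ne_zero.2 (Nat.factorial_ne_zero _)
      have h5 : ∀ (A : F) (f : Fin (i+2) → Fin (i+1) → F),
        ∑ t : Fin (i+2), (-1 : F)^t.1 * ∑ s : Fin (i+1), (-1 : F)^s.1 * (A * f t s)
          = A * ∑ t : Fin (i+2), (-1 : F)^t.1 * ∑ s : Fin (i+1), (-1 : F)^s.1 * f t s := by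
        intro A f
        simp only [Finset.mul_sum]
        refine Finset.sum_congr rfl fun t _ => Finset.sum_congr rfl fun s _ => ?_
        ring
      rw [h5]
      generalize (∑ t : Fin (i+2), (-1 : F)^t.1 * ∑ s : Fin (i+1), (-1 : F)^s.1 * _) = Z
      rw [pow_succ]
      push_cast at h3 ⊢
      field_simp
    · have hc' : ¬ ((i+2) % 2 = 0 ∧ (i+2)/2 + j' = j + 1) := by omega
      simp only [Y, if_neg hc, if_neg hc']
      simp

theorem X_eq_Y (pr : g →ₗ[F] g) (j : ℕ) :
    ∀ {P : (Fin j → g) → F}, SymM j P → X pr j P = Y pr j P := by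
  induction j with
  | zero =>
    intro P hP
    funext i j v w
    rw [X_zero, emb, Y]
    by_cases h : i = 0 ∧ j = 0
    · obtain ⟨rfl, rfl⟩ := h
      simp [FS]
      congr 1; funext t; exact t.elim0
    · rw [dif_neg h, if_neg (by omega)]
  | succ j ih =>
    intro P hP
    funext i j' v w
    simp only [X_succ, ih (hP.pd _), Th]
    simp only [Pi.smul_apply, Pi.add_apply, smul_eq_mul, mW_Y pr hP, AA_Y]
    rw [← add_mul]
    by_cases hc : i % 2 = 0 ∧ i/2 + j' = j + 1
    · have h1 : (j':F) + ((i/2:ℕ):F) = ((j+1:ℕ):F) := by rw [← hc.2]; push_cast; ring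
      rw [h1, ← mul_assoc, inv_mul_cancel₀ (Nat.cast_ne_zero.2 (by omega)), one_mul]
    · simp [Y, if_neg hc]

theorem chi_eq_Y (pr : g →ₗ[F] g) (j : ℕ) {P : (Fin j → g) → F} (hP : SymM j P) :
    chiW F g pr j P = Y pr j P := by
  funext i j' v w
  rw [chiW, Y]
  by_cases hc : i % 2 = 0 ∧ i/2 + j' = j
  · rw [dif_pos hc, if_pos hc, mul_assoc]
    congr 1
    let a : Fin (i/2) → Fin i := fun t => ⟨2*t.1, by have := t.2; omega⟩
    let b : Fin (i/2) → Fin i := fun t => ⟨2*t.1+1, by have := t.2; omega⟩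
    let h : Equiv.Perm (Fin i) → F := fun σ =>
      ((Equiv.Perm.sign σ : ℤ) : F) * P (fun t => T pr (v ∘ σ) w t.1)
    have hh : ∀ σ t, h (σ * Equiv.swap (a t) (b t)) = h σ := by
      intro σ t
      have hab : a t ≠ b t := by simp [a, b]
      have ht : t.1 < j := by have := t.2; omega
      have e : (fun s : Fin j => T pr (v ∘ (σ * Equiv.swap (a t) (b t))) w s.1)
        = Function.update (fun s : Fin j => T pr (v ∘ σ) w s.1) ⟨t.1, ht⟩
          ((-1 : F) • T pr (v ∘ σ) w t.1) := by
        funext s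
        by_cases hst : s = ⟨t.1, ht⟩
        · subst hst
          have h1 := (a t).2
          have h2 := (b t).2
          simp only [a, b] at h1 h2
          simp only [Function.update_self, T, t.2, if_true, ext, h1, h2, dif_pos, Function.comp,
            Equiv.Perm.mul_apply]
          have e1 : Equiv.swap (a t) (b t) ⟨2*t.1, h1⟩ = b t := Equiv.swap_apply_left _ _
          have e2 : Equiv.swap (a t) (b t) ⟨2*t.1+1, h2⟩ = a t := Equiv.swap_apply_right _ _
          rw [e1, e2, curvL_skew, neg_one_smul]
        · rw [Function.update_of_ne hst]
          have hne : s.1 ≠ t.1 := fun H => hst (Fin.ext H)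
          simp only [T]
          by_cases hs : s.1 < i/2
          · have h1 : 2 * s.1 < i := by omega
            have h2 : 2 * s.1 + 1 < i := by omega
            simp only [hs, if_true, ext, h1, h2, dif_pos, Function.comp, Equiv.Perm.mul_apply]
            rw [Equiv.swap_apply_of_ne_of_ne, Equiv.swap_apply_of_ne_of_ne] <;>
              simp [a, b, Fin.ext_iff] <;> omega
          · simp only [hs, if_false]
      simp only [h]
      rw [e, hP.smul, Function.update_eq_self_iff.2 rfl, Equiv.Perm.sign_mul,
        Equiv.Perm.sign_swap hab]
      push_cast
      ring
    have key := half_sum a b (by intro s t; simp [a, b, Fin.ext_iff]; omega)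
      (by intro s t; simp [a, Fin.ext_iff]) (by intro s t; simp [b, Fin.ext_iff]) h hh (i/2) le_rfl
    have h2 : ((2 : F)^(i/2)) ≠ 0 := pow_ne_zero _ two_ne_zero
    rw [eq_inv_mul_iff_mul_eq₀ h2, FS, ← key]
    congr 1
    refine Finset.sum_congr rfl fun σ _ => ?_
    have hq : (∀ t : Fin (i/2), t.1 < i/2 → σ (a t) < σ (b t)) ↔ (∀ t : Fin (i/2), σ (a t) < σ (b t)) :=
      forall_congr' fun t => ⟨fun H => H t.2, fun H _ => H⟩
    simp only [hq]
    refine if_congr Iff.rfl ?_ rfl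
    simp only [h]
    rw [zsmul_eq_mul]
    congr 2
    funext t
    simp only [T]
    by_cases hs : t.1 < i/2
    · have h1 : 2 * t.1 < i := by omega
      have h2 : 2 * t.1 + 1 < i := by omega
      simp only [hs, dif_pos, if_true, ext, h1, h2, curvL_apply, Function.comp]
    · have h1 : t.1 - i/2 < j' := by have := t.2; omega
      simp only [hs, dif_neg, if_false, ext, h1, dif_pos, not_false_iff]
  · rw [dif_neg hc, if_neg hc]

theorem chi_eq_X (pr : g →ₗ[F] g) (j : ℕ) {P : (Fin j → g) → F} (hP : SymM j P) :
    chiW F g pr j P = X pr j P := by rw [chi_eq_Y pr j hP, X_eq_Y pr j hP]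

theorem chi_zero (pr : g →ₗ[F] g) (j : ℕ) (P : (Fin j → g) → F) (v w) :
    chiW F g pr j P 0 j v w = P (fun t => pr (w t)) := by
  rw [chiW, dif_pos (by simp)]
  simp

theorem chi_chern (pr : g →ₗ[F] g) (j : ℕ) (P : (Fin j → g) → F) (v : Fin (2*j) → g) (w) :
    chiW F g pr j P (2*j) 0 v w = chernW F g pr j P v := by
  have h2 : 2*j/2 = j := by omega
  rw [chiW, dif_pos (by omega), chernW]
  congr 1
  · rw [h2]
  refine Finset.sum_congr rfl fun σ _ => ?_
  refine if_congr ?_ ?_ rfl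
  · constructor
    · intro H t
      exact H ⟨t.1, by have := t.2; omega⟩
    · intro H t
      exact H ⟨t.1, by have := t.2; omega⟩
  · congr 2
    funext t
    rw [dif_pos (by have := t.2; omega)]

end Explicit
end WeilAux
namespace WeilAux

section Poly

open Polynomial

variable {F : Type*} [Field F] {M : Type*} [AddCommGroup M] [Module F M]

theorem aeval_mem {N : Module.End F M} {H : Submodule F M} (hN : ∀ c ∈ H, N c ∈ H) (p : F[X]) :
    ∀ c ∈ H, aeval N p c ∈ H := by
  induction p using Polynomial.induction_on with
  | C a => intro c hc; rw [aeval_C, Module.algebraMap_end_apply]; exact H.smul_mem _ hc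
  | add p q hp hq =>
    intro c hc; rw [map_add, LinearMap.add_apply]; exact H.add_mem (hp c hc) (hq c hc)
  | monomial n a ih =>
    intro c hc
    rw [pow_succ, ← mul_assoc, map_mul, aeval_X, Module.End.mul_apply]
    exact ih _ (hN c hc)

theorem intertw {N T : Module.End F M} {H : Submodule F M} (hN : ∀ c ∈ H, N c ∈ H) (e : F)
    (hT : ∀ c ∈ H, T (N c) = N (T c) + e • T c) (p : F[X]) :
    ∀ c ∈ H, T (aeval N p c) = aeval N (p.comp (Polynomial.X + C e)) (T c) := by
  induction p using Polynomial.induction_on with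
  | C a => intro c hc; simp
  | add p q hp hq =>
    intro c hc
    rw [map_add, LinearMap.add_apply, map_add, hp c hc, hq c hc, add_comp, map_add,
      LinearMap.add_apply]
  | monomial n a ih =>
    intro c hc
    rw [pow_succ, ← mul_assoc, map_mul, aeval_X, Module.End.mul_apply, ih _ (hN c hc), hT c hc,
      mul_comp (C a * Polynomial.X ^ n), X_comp, map_mul, Module.End.mul_apply, map_add (aeval N), aeval_X, aeval_C,
      LinearMap.add_apply, Module.algebraMap_end_apply]

end Poly

section Homotopy

open Polynomial

variable {F : Type*} [Field F] [CharZero F] {g : Type*} [LieRing g] [LieAlgebra F g]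

/-- the homotopy -/
def sW (q : g →ₗ[F] g) : Wt F g →ₗ[F] Wt F g where
  toFun c := AW (fun y => kW (q y) c)
  map_add' a b := by
    rw [← map_add]; congr 1
  map_smul' r a := by
    rw [← map_smul]; congr 1

theorem sW_apply (q : g →ₗ[F] g) (c : Wt F g) : sW q c = AW (fun y => kW (q y) c) := rfl

/-- the number operator -/
def NW (q : g →ₗ[F] g) : Module.End F (Wt F g) := dK ∘ₗ sW q + sW q ∘ₗ dK

theorem NW_apply (q : g →ₗ[F] g) (c : Wt F g) : NW q c = dK (sW q c) + sW q (dK c) := rfl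

/-- horizontal elements -/
def Hor (h : LieSubalgebra F g) : Submodule F (Wt F g) where
  carrier := {c | IsAlt c ∧ ∀ x ∈ h, iW x c = 0}
  add_mem' := fun ha hb => ⟨ha.1.add hb.1, fun x hx => by rw [map_add, ha.2 x hx, hb.2 x hx, add_zero]⟩
  zero_mem' := ⟨IsAlt.zero, fun x _ => map_zero _⟩
  smul_mem' := fun r a ha => ⟨ha.1.smul r, fun x hx => by rw [map_smul, ha.2 x hx, smul_zero]⟩

/-- basic elements -/
def Rel (h : LieSubalgebra F g) : Submodule F (Wt F g) where
  carrier := {c | c ∈ Hor h ∧ ∀ x ∈ h, LW x c = 0}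
  add_mem' := fun ha hb => ⟨(Hor h).add_mem ha.1 hb.1,
    fun x hx => by rw [map_add, ha.2 x hx, hb.2 x hx, add_zero]⟩
  zero_mem' := ⟨(Hor h).zero_mem, fun x _ => map_zero _⟩
  smul_mem' := fun r a ha => ⟨(Hor h).smul_mem r ha.1,
    fun x hx => by rw [map_smul, ha.2 x hx, smul_zero]⟩

variable {h : LieSubalgebra F g} {q pr : g →ₗ[F] g}

theorem iW_sW (x : g) (c : Wt F g) : iW x (sW q c) = kW (q x) c - sW q (iW x c) := by
  rw [sW_apply, iW_AW]; rfl

theorem kW_sW {c : Wt F g} (hc : IsAlt c) (x : g) : kW x (sW q c) = sW q (kW x c) := by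
  rw [sW_apply, kW_AW, sW_apply]
  congr 1; funext y
  exact hc.kW_kW _ _

theorem iW_NW {c : Wt F g} (hc : IsAlt c) (x : g) :
    iW x (NW q c) = NW q (iW x c) + iW (q x) c := by
  have hs : IsAlt (sW q c) := hc.AWk q
  rw [NW_apply, map_add, hs.iW_dK, iW_sW, iW_sW, hc.iW_dK, NW_apply, map_sub, kW_dK, map_neg]
  abel

theorem kW_NW {c : Wt F g} (hc : IsAlt c) (x : g) :
    kW x (NW q c) = NW q (kW x c) + kW (q x) c := by
  rw [NW_apply, map_add, kW_dK, kW_sW hc, kW_sW hc.dK, kW_dK, iW_sW, NW_apply, map_add]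
  abel

theorem NW_zz (c : Wt F g) : NW q c 0 0 = 0 := by
  rw [NW_apply, Pi.add_apply, Pi.add_apply]
  exact add_zero _

theorem NW_alt {c : Wt F g} (hc : IsAlt c) : IsAlt (NW q c) :=
  (IsAlt.dK (hc.AWk q)).add (hc.dK.AWk q)

theorem dK_NW {c : Wt F g} (hc : IsAlt c) : dK (NW q c) = NW q (dK c) := by
  rw [NW_apply, map_add, show dK (dK (sW q c)) = 0 from IsAlt.dK_dK (hc.AWk q), NW_apply, hc.dK_dK, map_zero]
  abel

theorem kW_z {c : Wt F g} (hc : IsAlt c) : kW 0 c = 0 := by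
  have := hc.kW_smul 0 0
  rwa [zero_smul, zero_smul] at this

theorem iW_z {c : Wt F g} (hc : IsAlt c) : iW 0 c = 0 := by
  have := hc.iW_smul 0 0
  rwa [zero_smul, zero_smul] at this

theorem iW_anti {c : Wt F g} (hc : IsAlt c) (x y : g) : iW x (iW y c) = -iW y (iW x c) := by
  have h1 := hc.iW_iW (x + y)
  have h2 := hc.iW_add x y
  have h3 := (hc.iW x).iW_add x y
  have h4 := (hc.iW y).iW_add x y
  rw [h2, map_add, h3, h4, hc.iW_iW, hc.iW_iW, zero_add, add_zero] at h1
  exact eq_neg_of_add_eq_zero_right h1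

theorem Hor.iW {c : Wt F g} (hc : c ∈ Hor h) (x : g) : iW x c ∈ Hor h :=
  ⟨hc.1.iW x, fun y hy => by
    rw [iW_anti hc.1, hc.2 y hy, map_zero, neg_zero]⟩

theorem Hor.kW {c : Wt F g} (hc : c ∈ Hor h) (x : g) : kW x c ∈ Hor h :=
  ⟨hc.1.kW x, fun y hy => by rw [iW_kW, hc.2 y hy, map_zero]⟩

theorem Hor.dK {c : Wt F g} (hc : c ∈ Hor h) : dK c ∈ Hor h :=
  ⟨hc.1.dK, fun y hy => by rw [hc.1.iW_dK, hc.2 y hy, map_zero, neg_zero]⟩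

theorem Hor.sW (hq0 : ∀ x ∈ h, q x = 0) {c : Wt F g} (hc : c ∈ Hor h) : sW q c ∈ Hor h :=
  ⟨hc.1.AWk q, fun y hy => by
    rw [iW_sW, hq0 y hy, hc.2 y hy, map_zero, sub_zero, kW_z hc.1]⟩

theorem Hor.NW (hq0 : ∀ x ∈ h, q x = 0) {c : Wt F g} (hc : c ∈ Hor h) : NW q c ∈ Hor h :=
  (Hor h).add_mem (Hor.dK (Hor.sW hq0 hc)) (Hor.sW hq0 (Hor.dK hc))

theorem Rel.dK {c : Wt F g} (hc : c ∈ Rel h) : dK c ∈ Rel h :=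
  ⟨Hor.dK hc.1, fun y hy => by rw [hc.1.1.LW_dK, hc.2 y hy, map_zero]⟩

theorem Rel.DW {c : Wt F g} (hc : c ∈ Rel h) : DW c ∈ Rel h :=
  ⟨⟨hc.1.1.DW, fun y hy => by rw [hc.1.1.iW_DW, hc.2 y hy, hc.1.2 y hy, map_zero, sub_zero]⟩,
    fun y hy => by rw [hc.1.1.LW_DW, hc.2 y hy, map_zero]⟩

theorem Rel.sW (hq0 : ∀ x ∈ h, q x = 0) (hqe : ∀ x ∈ h, ∀ y, q ⁅x, y⁆ = ⁅x, q y⁆)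
    {c : Wt F g} (hc : c ∈ Rel h) : sW q c ∈ Rel h :=
  ⟨Hor.sW hq0 hc.1, fun x hx => by
    rw [sW_apply, LW_AW]
    have : (fun y => WeilAux.LW x (WeilAux.kW (q y) c) - WeilAux.kW (q ⁅x, y⁆) c)
        = (0 : g → Wt F g) := by
      funext y
      have := kW_LW (q y) x c
      rw [hc.2 x hx, map_zero] at this
      rw [hqe x hx]; exact this.symm
    rw [this, map_zero]⟩

theorem Rel.NW (hq0 : ∀ x ∈ h, q x = 0) (hqe : ∀ x ∈ h, ∀ y, q ⁅x, y⁆ = ⁅x, q y⁆)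
    {c : Wt F g} (hc : c ∈ Rel h) : NW q c ∈ Rel h :=
  (Rel h).add_mem (Rel.dK (Rel.sW hq0 hqe hc)) (Rel.sW hq0 hqe (Rel.dK hc))

/-- complementary projection -/
def qq (pr : g →ₗ[F] g) : g →ₗ[F] g := LinearMap.id - pr

theorem qq_apply (x : g) : qq pr x = x - pr x := rfl

theorem qq0 (hpr : IsEqProj F g h pr) : ∀ x ∈ h, qq pr x = 0 := fun x hx => by
  rw [qq_apply, hpr.2.1 x hx, sub_self]

theorem qqe (hpr : IsEqProj F g h pr) : ∀ x ∈ h, ∀ y, qq pr ⁅x, y⁆ = ⁅x, qq pr y⁆ :=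
  fun x hx y => by rw [qq_apply, qq_apply, hpr.2.2 x hx, lie_sub]

theorem qqpr (hpr : IsEqProj F g h pr) (x : g) : qq pr (pr x) = 0 := qq0 hpr _ (hpr.1 x)

theorem qqqq (hpr : IsEqProj F g h pr) (x : g) : qq pr (qq pr x) = qq pr x := by
  rw [qq_apply x, map_sub, qqpr hpr, sub_zero, qq_apply]

theorem iW_p (hpr : IsEqProj F g h pr) (p : F[X]) {c : Wt F g} (hc : c ∈ Hor h) (x : g) :
    iW x (aeval (NW (qq pr)) p c) = aeval (NW (qq pr)) (p.comp (Polynomial.X + C 1)) (iW x c) := by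
  refine intertw (N := NW (qq pr)) (T := iW x) (H := Hor h) (fun c hc => Hor.NW (qq0 hpr) hc) 1 ?_ p c hc
  intro c hc
  rw [iW_NW hc.1, one_smul, qq_apply, hc.1.iW_sub, hc.2 _ (hpr.1 x), sub_zero]

theorem kW_p1 (hpr : IsEqProj F g h pr) (p : F[X]) {c : Wt F g} (hc : c ∈ Hor h) (x : g) :
    kW (qq pr x) (aeval (NW (qq pr)) p c)
      = aeval (NW (qq pr)) (p.comp (Polynomial.X + C 1)) (kW (qq pr x) c) := by
  refine intertw (N := NW (qq pr)) (T := kW (qq pr x)) (H := Hor h)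
    (fun c hc => Hor.NW (qq0 hpr) hc) 1 ?_ p c hc
  intro c hc
  rw [kW_NW hc.1, one_smul, qqqq hpr]

theorem kW_p0 (hpr : IsEqProj F g h pr) (p : F[X]) {c : Wt F g} (hc : c ∈ Hor h) (x : g) :
    kW (pr x) (aeval (NW (qq pr)) p c) = aeval (NW (qq pr)) p (kW (pr x) c) := by
  have := intertw (N := NW (qq pr)) (T := kW (pr x)) (H := Hor h)
    (fun c hc => Hor.NW (qq0 hpr) hc) 0 (fun c hc => by
      rw [kW_NW hc.1, zero_smul, qqpr hpr, kW_z hc.1]) p c hc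
  rwa [C_0, add_zero, comp_X] at this

theorem kW_split (c : Wt F g) (hc : IsAlt c) (x : g) : kW x c = kW (qq pr x) c + kW (pr x) c := by
  rw [← hc.kW_add, qq_apply, sub_add_cancel]

theorem p_alt (p : F[X]) {c : Wt F g} (hc : IsAlt c) : IsAlt (aeval (NW q) p c) :=
  aeval_mem (H := Alt F g) (fun c hc => mem_Alt.2 (NW_alt (mem_Alt.1 hc))) p c hc

theorem claimA (hpr : IsEqProj F g h pr) : ∀ (i j n : ℕ), i + j ≤ n → ∀ (p : F[X]),
    (∀ a : ℕ, a ≤ n → p.eval (a : F) = 0) → ∀ c ∈ Hor h, aeval (NW (qq pr)) p c i j = 0 := by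
  have shift : ∀ (n : ℕ) (p : F[X]), (∀ a : ℕ, a ≤ n + 1 → p.eval (a : F) = 0) →
      ∀ a : ℕ, a ≤ n → (p.comp (Polynomial.X + C 1)).eval (a : F) = 0 := by
    intro n p hp a ha
    have := hp (a+1) (by omega)
    rw [eval_comp]; simpa using this
  intro i
  induction i with
  | zero =>
    intro j
    induction j with
    | zero =>
      intro n _ p hp c hc
      have h0 : p.coeff 0 = 0 := by
        have := hp 0 (by omega)
        rwa [Nat.cast_zero, ← coeff_zero_eq_eval_zero] at this
      rw [← X_mul_divX_add p, h0, C_0, add_zero, map_mul, aeval_X, Module.End.mul_apply]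
      exact NW_zz _
    | succ j ih =>
      intro n hn p hp c hc
      obtain ⟨n, rfl⟩ : ∃ k, n = k + 1 := ⟨n - 1, by omega⟩
      funext v w
      rw [← Fin.cons_self_tail w, ← kW_apply (w 0) (aeval (NW (qq pr)) p c), kW_split (pr := pr) _ (p_alt p hc.1),
        kW_p1 hpr p hc, kW_p0 hpr p hc, Pi.add_apply, Pi.add_apply,
        ih n (by omega) _ (shift n p hp) _ (Hor.kW hc _), ih (n+1) (by omega) _ hp _ (Hor.kW hc _),
        add_zero]
      rfl
  | succ i ih =>
    intro j n hn p hp c hc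
    obtain ⟨n, rfl⟩ : ∃ k, n = k + 1 := ⟨n - 1, by omega⟩
    funext v w
    rw [← Fin.cons_self_tail v, ← iW_apply (v 0) (aeval (NW (qq pr)) p c), iW_p hpr p hc,
      ih j n (by omega) _ (shift n p hp) _ (Hor.iW hc _)]
    rfl

theorem claimB (hpr : IsEqProj F g h pr) : ∀ (i j n : ℕ), i + j ≤ n → ∀ (p : F[X]),
    (∀ a : ℕ, 1 ≤ a → a ≤ n → p.eval (a : F) = 0) → ∀ c ∈ Hor h,
    (∀ (j : ℕ) v (w : Fin j → g), c 0 j v (fun t => pr (w t)) = 0) → aeval (NW (qq pr)) p c i j = 0 := by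
  have shift : ∀ (n : ℕ) (p : F[X]), (∀ a : ℕ, 1 ≤ a → a ≤ n + 1 → p.eval (a : F) = 0) →
      ∀ a : ℕ, a ≤ n → (p.comp (Polynomial.X + C 1)).eval (a : F) = 0 := by
    intro n p hp a ha
    have := hp (a+1) (by omega) (by omega)
    rw [eval_comp]; simpa using this
  intro i j n hn p hp c hc hc0
  cases i with
  | succ i =>
    obtain ⟨n, rfl⟩ : ∃ k, n = k + 1 := ⟨n - 1, by omega⟩
    funext v w
    rw [← Fin.cons_self_tail v, ← iW_apply (v 0) (aeval (NW (qq pr)) p c), iW_p hpr p hc,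
      claimA hpr i j n (by omega) _ (shift n p hp) _ (Hor.iW hc _)]
    rfl
  | zero =>
    induction j generalizing c with
    | zero =>
      rw [← X_mul_divX_add p, map_add, map_mul, aeval_X, LinearMap.add_apply,
        Module.End.mul_apply, Pi.add_apply, Pi.add_apply, NW_zz, zero_add, aeval_C,
        Module.algebraMap_end_apply]
      funext v w
      have := hc0 0 v w
      rw [Subsingleton.elim (fun t => pr (w t)) w] at this
      simp [this]
    | succ j ih =>
      obtain ⟨n, rfl⟩ : ∃ k, n = k + 1 := ⟨n - 1, by omega⟩
      funext v w
      rw [← Fin.cons_self_tail w, ← kW_apply (w 0) (aeval (NW (qq pr)) p c), kW_split (pr := pr) _ (p_alt p hc.1),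
        kW_p1 hpr p hc, kW_p0 hpr p hc, Pi.add_apply, Pi.add_apply,
        claimA hpr 0 j n (by omega) _ (shift n p hp) _ (Hor.kW hc _),
        ih _ (Hor.kW hc _) ?_ (by omega), add_zero]
      · rfl
      · intro j v u
        rw [kW_apply]
        have := hc0 (j+1) v (Fin.cons (w 0) u)
        rw [← this]; congr 1
        funext t
        refine Fin.cases ?_ (fun t => ?_) t <;> simp

/-- exactness of the Koszul differential -/
theorem exact_dK (hpr : IsEqProj F g h pr) (n : ℕ) {c : Wt F g} (hc : c ∈ Rel h)
    (hc0 : ∀ (j : ℕ) v (w : Fin j → g), c 0 j v (fun t => pr (w t)) = 0) (hd : dK c = 0) :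
    ∃ b ∈ Rel h, ∀ i j, i + j ≤ n → dK b i j = c i j := by
  let p : F[X] := ∏ a ∈ Finset.Icc 1 n, (Polynomial.X - C (a : F))
  have hp : ∀ a : ℕ, 1 ≤ a → a ≤ n → p.eval (a : F) = 0 := by
    intro a h1 h2
    rw [eval_prod]
    exact Finset.prod_eq_zero (Finset.mem_Icc.2 ⟨h1, h2⟩) (by simp)
  have hp0 : p.coeff 0 ≠ 0 := by
    rw [coeff_zero_eq_eval_zero, eval_prod, Finset.prod_ne_zero_iff]
    intro a ha
    have := (Finset.mem_Icc.1 ha).1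
    simp; omega
  have hB := claimB hpr
  refine ⟨-((p.coeff 0)⁻¹) • sW (qq pr) (aeval (NW (qq pr)) p.divX c),
    (Rel h).smul_mem _ (Rel.sW (qq0 hpr) (qqe hpr)
      (aeval_mem (H := Rel h) (fun c hc => Rel.NW (qq0 hpr) (qqe hpr) hc) _ c hc)), ?_⟩
  intro i j hij
  have h1 := hB i j n hij p hp c hc.1 hc0
  have h2 : dK (aeval (NW (qq pr)) p.divX c) = 0 := by
    have := intertw (N := NW (qq pr)) (T := dK) (H := Alt F g)
      (fun c hc => mem_Alt.2 (NW_alt (mem_Alt.1 hc))) 0 (fun c hc => by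
      rw [dK_NW (mem_Alt.1 hc), zero_smul, add_zero]) p.divX c (mem_Alt.2 hc.1.1)
    rw [this, hd, map_zero]
  rw [← X_mul_divX_add p, map_add, map_mul, aeval_X, LinearMap.add_apply,
        Module.End.mul_apply, aeval_C, Module.algebraMap_end_apply, NW_apply, h2, map_zero,
        add_zero] at h1
  rw [map_smul]
  funext v w
  have h3 := congrFun (congrFun h1 v) w
  simp only [Pi.add_apply, Pi.smul_apply, smul_eq_mul, Pi.zero_apply] at h3 ⊢
  rw [eq_neg_of_add_eq_zero_left h3]
  field_simp

end Homotopy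

end WeilAux
namespace WeilAux

section Final

variable {F : Type*} [Field F] [CharZero F] {g : Type*} [LieRing g] [LieAlgebra F g]
  {h : LieSubalgebra F g} {pr : g →ₗ[F] g}

theorem rel_iff (c : Wt F g) : c ∈ Rel h ↔ ∀ i j, IsWCochain F g h i j (c i j) := by
  constructor
  · rintro ⟨⟨ha, hi⟩, hL⟩ i j
    refine ⟨ha.va i j, ha.vs i j, ha.alt i j, ha.wa i j, ha.ws i j, ha.sym i j, ?_, ?_⟩
    · intro v t w hv
      cases i with
      | zero => exact t.elim0
      | succ i =>
        have h1 := ha.cons_succAbove i j v t (v t) w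
        rw [← iW_apply (v t) c, hi _ hv, Function.update_eq_self] at h1
        have h2 : ((-1 : F) ^ (t : ℕ)) ≠ 0 := pow_ne_zero _ (neg_ne_zero.2 one_ne_zero)
        exact (mul_eq_zero.1 h1.symm).resolve_left h2
    · intro x hx v w
      have := congrFun (congrFun (congrFun (congrFun (hL x hx) i) j) v) w
      exact neg_eq_zero.1 this
  · intro H
    refine ⟨⟨⟨fun i j => (H i j).1, fun i j => (H i j).2.1, fun i j => (H i j).2.2.1,
      fun i j => (H i j).2.2.2.1, fun i j => (H i j).2.2.2.2.1,
      fun i j => (H i j).2.2.2.2.2.1⟩, ?_⟩, ?_⟩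
    · intro x hx
      funext i j v w
      exact (H (i+1) j).2.2.2.2.2.2.1 (Fin.cons x v) 0 w hx
    · intro x hx
      funext i j v w
      exact neg_eq_zero.2 ((H i j).2.2.2.2.2.2.2 x hx v w)

/-- total degree -/
def Deg (m : ℕ) (c : Wt F g) : Prop := ∀ i j, i + 2*j ≠ m → c i j = 0

theorem elt_iff (m : ℕ) (c : Wt F g) : IsWElt F g h m c ↔ c ∈ Rel h ∧ Deg m c := by
  rw [rel_iff]; rfl

theorem dWeil_DW (c : Wt F g) : dWeil F g c = DW c := dWeil_eq c

open Classical in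
/-- truncation -/
def tr (p : ℕ → ℕ → Prop) (c : Wt F g) : Wt F g := fun i j => if p i j then c i j else 0

theorem tr_pos {p : ℕ → ℕ → Prop} {c : Wt F g} {i j : ℕ} (hp : p i j) : tr p c i j = c i j :=
  if_pos hp

theorem tr_neg {p : ℕ → ℕ → Prop} {c : Wt F g} {i j : ℕ} (hp : ¬ p i j) : tr p c i j = 0 :=
  if_neg hp

theorem Rel.tr {p : ℕ → ℕ → Prop} {c : Wt F g} (hc : c ∈ Rel h) : tr p c ∈ Rel h := by
  rw [rel_iff] at hc ⊢
  intro i j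
  by_cases hp : p i j
  · rw [tr_pos hp]; exact hc i j
  · rw [tr_neg hp]
    exact (rel_iff (0 : Wt F g)).1 (Rel h).zero_mem i j

theorem dL_congr {a b : Wt F g} {i j : ℕ} (hab : ∀ i', i' + 1 = i → a i' j = b i' j) :
    dL a i j = dL b i j := by
  cases i with
  | zero => rfl
  | succ i =>
    change dLieS F g i j (a i j) = dLieS F g i j (b i j)
    rw [hab i rfl]

theorem dK_congr {a b : Wt F g} {i j : ℕ} (hab : ∀ j', j' + 1 = j → a (i+1) j' = b (i+1) j') :
    dK a i j = dK b i j := by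
  cases j with
  | zero => rfl
  | succ j =>
    change dKoszul F g i j (a (i+1) j) = dKoszul F g i j (b (i+1) j)
    rw [hab j rfl]

theorem dL_eq_zero {a : Wt F g} {i j : ℕ} (ha : ∀ i', i' + 1 = i → a i' j = 0) :
    dL a i j = 0 := by
  rw [dL_congr (b := 0) ha, map_zero]; rfl

theorem dK_eq_zero {a : Wt F g} {i j : ℕ} (ha : ∀ j', j' + 1 = j → a (i+1) j' = 0) :
    dK a i j = 0 := by
  rw [dK_congr (b := 0) ha, map_zero]; rfl

theorem DW_ij (c : Wt F g) (i j : ℕ) : DW c i j = dL c i j + dK c i j := rfl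

theorem Deg.DW {m : ℕ} {c : Wt F g} (hc : Deg m c) : Deg (m+1) (DW c) := by
  intro i j hij
  rw [DW_ij, dL_eq_zero, dK_eq_zero, add_zero]
  · intro j' hj; exact hc _ _ (by omega)
  · intro i' hi; exact hc _ _ (by omega)

theorem cobd_h {m : ℕ} {U : Wt F g} (hU : IsWCobd F g h m U) (j : ℕ) (v : Fin 0 → g)
    (w : Fin j → g) (hw : ∀ r, w r ∈ h) : U 0 j v w = 0 := by
  cases m with
  | zero => rw [hU 0 j]; rfl
  | succ m =>
    obtain ⟨W, hW, rfl⟩ := hU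
    rw [dWeil_DW, DW_ij, dL_zero, zero_add]
    cases j with
    | zero => rfl
    | succ j =>
      change dKoszul F g 0 j (W (0+1) j) v w = 0
      refine Finset.sum_eq_zero fun r _ => ?_
      exact (hW.1 (0+1) j).2.2.2.2.2.2.1 (Fin.cons (w r) v) 0 _ (hw r)

theorem core_aux (hpr : IsEqProj F g h pr) (m : ℕ) : ∀ n k : ℕ, k + n = m + 2 → ∀ U ∈ Rel h,
    Deg (m+1) U → DW U = 0 → (∀ (j : ℕ) v (w : Fin j → g), U 0 j v (fun t => pr (w t)) = 0) →
    (∀ i j, i < k → U i j = 0) → ∃ b ∈ Rel h, Deg m b ∧ DW b = U := by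
  intro n
  induction n with
  | zero =>
    intro k hk U hU hd _ _ hz
    refine ⟨0, (Rel h).zero_mem, fun _ _ _ => rfl, ?_⟩
    rw [map_zero]
    funext i j
    by_cases hi : i < k
    · rw [hz i j hi]; rfl
    · rw [hd i j (by omega)]; rfl
  | succ n ih =>
    intro k hk U hU hd hD h0 hz
    have hc : tr (fun i _ => i = k) U ∈ Rel h := Rel.tr hU
    obtain ⟨b0, hb0, hb⟩ := exact_dK hpr (m+1) hc
      (by
        intro j v w
        by_cases hk0 : 0 = k
        · rw [tr_pos (p := fun i _ => i = k) hk0]; exact h0 j v w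
        · rw [tr_neg (p := fun i _ => i = k) hk0]; rfl)
      (by
        funext i j
        by_cases hi : i + 1 = k
        · have h1 : dK (tr (fun i _ => i = k) U) i j = dK U i j :=
            dK_congr fun j' _ => tr_pos hi
          have h2 : DW U i j = dK U i j := by
            rw [DW_ij, dL_eq_zero fun i' hi' => hz i' j (by omega), zero_add]
          rw [h1, ← h2, hD]
        · exact dK_eq_zero fun j' _ => tr_neg hi)
    set b := tr (fun i j => i = k + 1 ∧ i + 2*j = m) b0 with hbdef
    have hbR : b ∈ Rel h := Rel.tr hb0
    have hbD : Deg m b := fun i j hij => tr_neg (fun H => hij H.2)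
    have hbd : IsWCobd F g h (m+1) (DW b) := ⟨b, (elt_iff m b).2 ⟨hbR, hbD⟩, dWeil_DW b⟩
    obtain ⟨b1, hb1, hd1, he1⟩ := ih (k+1) (by omega) (U - DW b)
      ((Rel h).sub_mem hU (Rel.DW hbR))
      (fun i j hij => by
        rw [Pi.sub_apply, Pi.sub_apply, hd i j hij, hbD.DW i j hij, sub_zero])
      (by rw [map_sub, hD, hbR.1.1.DW_DW, sub_zero])
      (by
        intro j v w
        have := cobd_h hbd j v (fun t => pr (w t)) (fun r => hpr.1 _)
        simp only [Pi.sub_apply]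
        rw [h0 j v w, this, sub_zero])
      (by
        intro i j hi
        rw [Pi.sub_apply, Pi.sub_apply, DW_ij, dL_eq_zero, zero_add]
        · by_cases hik : i = k
          · by_cases hm : i + 2*j = m + 1
            · have e1 : dK b i j = dK b0 i j :=
                dK_congr fun j' hj' => tr_pos ⟨by omega, by omega⟩
              rw [e1, hb i j (by omega), tr_pos (p := fun i _ => i = k) hik, sub_self]
            · rw [hd i j hm, dK_eq_zero, sub_zero]
              intro j' hj'; exact tr_neg (by omega)
          · rw [hz i j (by omega), dK_eq_zero, sub_zero]
            intro j' hj'; exact tr_neg (by omega)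
        · intro i' hi'; exact tr_neg (by omega))
    refine ⟨b1 + b, (Rel h).add_mem hb1 hbR, fun i j hij => ?_, ?_⟩
    · rw [Pi.add_apply, Pi.add_apply, hd1 i j hij, hbD i j hij, add_zero]
    · rw [map_add, he1, sub_add_cancel]

theorem core (hpr : IsEqProj F g h pr) (m : ℕ) (U : Wt F g) (hU : U ∈ Rel h) (hd : Deg m U)
    (hD : DW U = 0) (h0 : ∀ (j : ℕ) v (w : Fin j → g), U 0 j v (fun t => pr (w t)) = 0) :
    IsWCobd F g h m U := by
  cases m with
  | zero =>
    intro i j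
    by_cases hij : i + 2*j = 0
    · obtain ⟨rfl, rfl⟩ : i = 0 ∧ j = 0 := by omega
      funext v w
      refine Eq.trans ?_ (h0 0 v w)
      congr 1; exact Subsingleton.elim _ _
    · exact hd i j hij
  | succ m =>
    obtain ⟨b, hb, hbd, rfl⟩ := core_aux hpr m (m+2) 0 (by omega) U hU hd hD h0
      (fun i j hi => absurd hi (by omega))
    exact ⟨b, (elt_iff m b).2 ⟨hb, hbd⟩, dWeil_DW b⟩

theorem cobd_triv {m : ℕ} {U : Wt F g} (hU : IsWCobd F g h m U) :
    IsRelTrivCobdW F g h m (fun v => U m 0 v Fin.elim0) := by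
  cases m with
  | zero => funext v; rw [hU 0 0]; rfl
  | succ m =>
    obtain ⟨W, hW, rfl⟩ := hU
    refine ⟨fun v => W m 0 v Fin.elim0, ?_, ?_⟩
    · have H := hW.1 m 0
      refine ⟨fun v t x y => H.1 v t x y _, fun v t s x => H.2.1 v t s x _,
        fun v t t' => H.2.2.1 v t t' _, fun v t => H.2.2.2.2.2.2.1 v t _, fun x hx v => ?_⟩
      have := H.2.2.2.2.2.2.2 x hx v Fin.elim0
      rw [Finset.univ_eq_empty (α := Fin 0), Finset.sum_empty, add_zero] at this
      exact this
    · funext v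
      rw [dWeil_DW, DW_ij]
      change dLieS F g m 0 (W m 0) v Fin.elim0 + 0 = _
      simp [dLieS, dTrivW]

theorem chi_Rel (hpr : IsEqProj F g h pr) {j : ℕ} {P : (Fin j → g) → F}
    (hP : IsSymPoly F g h j P) : chiW F g pr j P ∈ Rel h := by
  rw [chi_eq_X pr j hP.symM]
  exact ⟨⟨X_alt pr j hP.symM, X_i hpr j hP.symM⟩, X_L hpr hP⟩

theorem chi_Deg (j : ℕ) (P : (Fin j → g) → F) : Deg (2*j) (chiW F g pr j P) := by
  intro i j' hij
  funext v w
  exact dif_neg (by omega)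

theorem chi_D (hpr : IsEqProj F g h pr) {j : ℕ} {P : (Fin j → g) → F}
    (hP : IsSymPoly F g h j P) : DW (chiW F g pr j P) = 0 := by
  rw [chi_eq_X pr j hP.symM]
  exact X_closed hpr hP

theorem Deg.sub {m : ℕ} {a b : Wt F g} (ha : Deg m a) (hb : Deg m b) : Deg m (a - b) :=
  fun i j hij => by rw [Pi.sub_apply, Pi.sub_apply, ha i j hij, hb i j hij, sub_zero]

end Final

end WeilAux

/-- let `g` be a Lie algebra over a field of characteristic zero and
`h ⊂ g` a finite-dimensional subalgebra admitting an `ad(h)`-invariant complement. Then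
for every `j ≥ 0` the characteristic homomorphism `χ_W : (S^j h)^{*h} → H^{2j}(W(g,h))` is
an isomorphism; its composition with `H(W(g,h)) → H(g,h)` sends `P` to the class of the
explicit relative Chern–Weil cocycle `χ(P)` built out of the curvature
`C(v,w) = [pr v, pr w] − pr[v,w]` of any `ad(h)`-equivariant projection `pr : g → h`,
and in particular the class of `χ(P)` is independent of the choice of `pr`. -/
theorem chiW_iso (F : Type*) [Field F] [CharZero F]
    (g : Type*) [LieRing g] [LieAlgebra F g]
    (h : LieSubalgebra F g) [FiniteDimensional F h]
    (V : Submodule F g) (hV : ∀ X ∈ h, ∀ v ∈ V, ⁅X, v⁆ ∈ V)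
    (hcompl : IsCompl h.toSubmodule V) :
    ∀ pr : g →ₗ[F] g, IsEqProj F g h pr → ∀ j : ℕ,
      -- χ_W(P) is a closed element of the Weil algebra of degree 2j:
      (∀ P, IsSymPoly F g h j P →
        IsWElt F g h (2*j) (chiW F g pr j P) ∧
          (∀ i j', dWeil F g (chiW F g pr j P) i j' = 0)) ∧
      -- injectivity of χ_W:
      (∀ P, IsSymPoly F g h j P → IsWCobd F g h (2*j) (chiW F g pr j P) →
        ∀ w : Fin j → g, (∀ r, w r ∈ h) → P w = 0) ∧
      -- surjectivity of χ_W: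
      (∀ W, IsWElt F g h (2*j) W → (∀ i j', dWeil F g W i j' = 0) →
        ∃ P, IsSymPoly F g h j P ∧ IsWCobd F g h (2*j) (W - chiW F g pr j P)) ∧
      -- the projection of χ_W(P) to C(g,h) is the explicit Chern–Weil cocycle χ(P):
      (∀ (P : (Fin j → g) → F) (v : Fin (2*j) → g),
        chiW F g pr j P (2*j) 0 v Fin.elim0 = chernW F g pr j P v) ∧
      -- the class of χ(P) does not depend on the choice of equivariant projection:
      (∀ pr' : g →ₗ[F] g, IsEqProj F g h pr' → ∀ P, IsSymPoly F g h j P →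
        IsRelTrivCobdW F g h (2*j)
          (fun v => chernW F g pr j P v - chernW F g pr' j P v)) := by
  open WeilAux in
  intro pr hpr j
  refine ⟨?_, ?_, ?_, fun P v => chi_chern pr j P v _, ?_⟩
  · intro P hP
    refine ⟨(elt_iff _ _).2 ⟨chi_Rel hpr hP, chi_Deg j P⟩, fun i j' => ?_⟩
    rw [dWeil_DW, chi_D hpr hP]; rfl
  · intro P hP hcob w hw
    have h1 := cobd_h hcob j Fin.elim0 w hw
    rw [chi_zero] at h1
    rw [← h1]; congr 1; funext t; exact (hpr.2.1 _ (hw t)).symm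
  · intro W hW hdW
    have hP : IsSymPoly F g h j (W 0 j Fin.elim0) := by
      have H := hW.1 0 j
      refine ⟨H.2.2.2.1 _, H.2.2.2.2.1 _, H.2.2.2.2.2.1 _, fun x hx w _ => ?_⟩
      have := H.2.2.2.2.2.2.2 x hx Fin.elim0 w
      rw [Finset.univ_eq_empty (α := Fin 0), Finset.sum_empty, zero_add] at this
      exact this
    have hD : DW W = 0 := by
      rw [← dWeil_DW]; funext i j'; rw [hdW i j']; rfl
    obtain ⟨hWR, hWD⟩ := (elt_iff _ _).1 hW
    have hdeg := hWD.sub (chi_Deg (pr := pr) j (W 0 j Fin.elim0))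
    refine ⟨_, hP, core hpr (2*j) _ ((WeilAux.Rel h).sub_mem hWR (chi_Rel hpr hP)) hdeg
      (by rw [map_sub, hD, chi_D hpr hP, sub_zero]) ?_⟩
    intro j' v w
    by_cases hj : j' = j
    · subst hj
      simp only [Pi.sub_apply]
      rw [chi_zero, Subsingleton.elim v Fin.elim0, sub_eq_zero]
      congr 1; funext t; exact (hpr.2.1 _ (hpr.1 _)).symm
    · rw [hdeg 0 j' (by omega)]; rfl
  · intro pr' hpr' P hP
    have hdeg := (chi_Deg (pr := pr) j P).sub (chi_Deg (pr := pr') j P)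
    have := cobd_triv (core hpr (2*j) _ ((WeilAux.Rel h).sub_mem (chi_Rel hpr hP) (chi_Rel hpr' hP)) hdeg
      (by rw [map_sub, chi_D hpr hP, chi_D hpr' hP, sub_zero]) (by
        intro j' v w
        by_cases hj : j' = j
        · subst hj
          simp only [Pi.sub_apply]
          rw [chi_zero, chi_zero, sub_eq_zero]
          congr 1; funext t
          rw [hpr.2.1 _ (hpr.1 _), hpr'.2.1 _ (hpr.1 _)]
        · rw [hdeg 0 j' (by omega)]; rfl))
    simp only [Pi.sub_apply, chi_chern] at this
    exact this

end
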